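/- For any fixed c ∈ ℤ≥2, the following problem is undecidable: given a network, decide whether there exists m ∈ ℤ≥1 such that the network is solvable with alphabet size q = c^m. -/

import Mathlib

open scoped Classical

noncomputable section

/-- The probability of the event `S` under the probability mass function `p`. -/
def Pr {Ω : Type} (p : Ω → ℝ) (S : Set Ω) : ℝ := ∑' ω : S, p ω

/-- `p` is a probability mass function on the sample space `Ω`. -/
def IsProb {Ω : Type} (p : Ω → ℝ) : Prop := (∀ ω, 0 ≤ p ω) ∧ Pr p Set.univ = 1

/-- The support of a random variable `X`: the set of values attained with positive
probability. -/
def supp {Ω α : Type} (p : Ω → ℝ) (X : Ω → α) : Set α := {a | 0 < Pr p {ω | X ω = a}}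

/-- `X` is almost surely a function of `Y` (written `X ≤ι Y` in the paper). -/
def FuncOf {Ω α β : Type} (p : Ω → ℝ) (X : Ω → α) (Y : Ω → β) : Prop :=
  ∃ f : β → α, Pr p {ω | X ω = f (Y ω)} = 1

/-- The random variables `X` and `Y` are independent. -/
def IndepRV {Ω α β : Type} (p : Ω → ℝ) (X : Ω → α) (Y : Ω → β) : Prop :=
  ∀ (a : α) (b : β), Pr p {ω | X ω = a ∧ Y ω = b} = Pr p {ω | X ω = a} * Pr p {ω | Y ω = b}

/-- The random variables `X`, `Y`, `Z` are mutually independent: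
`X ⟂ Y` and `(X, Y) ⟂ Z`. -/
def Indep3 {Ω α β γ : Type} (p : Ω → ℝ) (X : Ω → α) (Y : Ω → β) (Z : Ω → γ) : Prop :=
  IndepRV p X Y ∧ IndepRV p (fun ω => (X ω, Y ω)) Z

/-- The predicate `tri(X, Y, Z)`: each variable is a.s. a function of the other two, and the
three variables are pairwise independent. -/
def tri {Ω α β γ : Type} (p : Ω → ℝ) (X : Ω → α) (Y : Ω → β) (Z : Ω → γ) : Prop :=
  FuncOf p X (fun ω => (Y ω, Z ω)) ∧ FuncOf p Y (fun ω => (X ω, Z ω)) ∧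
    FuncOf p Z (fun ω => (X ω, Y ω)) ∧
    IndepRV p X Y ∧ IndepRV p X Z ∧ IndepRV p Y Z


/-- A network coding instance: `(n, s, edges, acc, dem)` where `n` is the number of nodes
(nodes are `0, …, n−1`), `s` is the number of source messages (messages are `0, …, s−1`),
`edges` is the list of directed edges of the multigraph (edges are indexed by their
position in the list), `acc` lists, for each node `v`, the set `C_v` of message indices
the node has access to, and `dem` lists, for each node `v`, the set `D_v` of message
indices the node demands. -/
abbrev Network : Type := ℕ × ℕ × List (ℕ × ℕ) × List (List ℕ) × List (List ℕ)

/-- The indices of the edges coming into node `v`. -/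
def inEdges (edges : List (ℕ × ℕ)) (v : ℕ) : List ℕ :=
  (List.range edges.length).filter fun e => (edges.getD e (0, 0)).2 = v

/-- The indices of the edges going out of node `v`. -/
def outEdges (edges : List (ℕ × ℕ)) (v : ℕ) : List ℕ :=
  (List.range edges.length).filter fun e => (edges.getD e (0, 0)).1 = v

/-- The network is valid: the edges join existing nodes, the directed multigraph is
acyclic (it admits a topological ranking), and the access/demand lists assign a set of
existing message indices to each node. -/
def NetworkValid : Network → Prop := fun net =>
  match net with
  | (n, s, edges, acc, dem) =>
    (∀ e ∈ edges, e.1 < n ∧ e.2 < n) ∧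
    (∃ rank : ℕ → ℕ, ∀ e ∈ edges, rank e.1 < rank e.2) ∧
    acc.length = n ∧ dem.length = n ∧
    (∀ l ∈ acc, ∀ i ∈ l, i < s) ∧ (∀ l ∈ dem, ∀ i ∈ l, i < s)

/-- The network is solvable with alphabet size `q`: there are a probability space, source
messages `M_0, …, M_{s−1}` that are i.i.d. uniform with cardinality `q`, and signals
`X_e` of cardinality at most `q` along the edges, such that at every node `v` the pair
`(M_{D_v}, X_{out(v)})` is almost surely a function of `(M_{C_v}, X_{in(v)})`. -/
def SolvableWith : Network → ℕ → Prop := fun net q =>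
  match net with
  | (n, s, edges, acc, dem) =>
    ∃ (Ω : Type) (p : Ω → ℝ), IsProb p ∧
      ∃ (M : ℕ → Ω → Fin q) (X : ℕ → Ω → Fin q),
        (∀ m : ℕ → Fin q,
          Pr p {ω | ∀ i < s, M i ω = m i} = ((q : ℝ))⁻¹ ^ s) ∧
        ∀ v < n, FuncOf p
          (fun ω => (((dem.getD v []).map fun i => M i ω),
                     (outEdges edges v).map fun e => X e ω))
          (fun ω => (((acc.getD v []).map fun i => M i ω),
                     (inEdges edges v).map fun e => X e ω))

/-- The network is solvable: it is solvable with some alphabet size `q ≥ 2`. -/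
def Solvable (net : Network) : Prop := ∃ q, 2 ≤ q ∧ SolvableWith net q

/-!
Decoding demands can force the signals of a network to be Latin squares. The level sets of a Latin
square are graphs of permutations of the alphabet, and further demands force composites of such
permutations to agree or two of them to differ. A network thus encodes a system of equations
`g a * g b = g c * g d` and a disequation `g w ≠ 1` between permutations. Conversely, a solution in
a finite group `G` for which `g w` is an involution yields a code whose alphabet consists of the
functions `G → ℤ/c`, hence has size `c ^ |G|`, for every `c`.

A partial multiplication table with a zero is encoded in group equations by the Steinberg relations
between the elementary matrices `1 + a • e i j` of size five. In a group satisfying them,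
commutators with elementary matrices act on columns of group elements, and this is an action of the
table on a pointed set. Conversely, a partial action on a finite set `S` represents the table by
endomorphisms of `S → 𝔽₂`, and the elementary matrices over these are involutions.

The table is a presentation of the steps of a stack machine on a given input, in which rejecting
states are zero. If the machine rejects, the representative of its initial configuration is zero in
every action on a pointed set, so the network is not solvable over any alphabet. If it accepts, the
table acts partially on stacks of bounded height, so the network is solvable over some power of
every `c`. A program deciding between these two cases would separate the inputs which a universal
machine rejects from those which it accepts, and diagonalisation excludes this.
-/

/-! ### Deterministic codes -/

namespace IsProb

variable {Ω : Type} {p : Ω → ℝ}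

theorem tsum_eq_one (hp : IsProb p) : ∑' ω, p ω = 1 := by
  simpa only [Pr, tsum_univ p] using hp.2

theorem summable (hp : IsProb p) : Summable p := by
  by_contra hns
  exact zero_ne_one ((tsum_eq_zero_of_not_summable hns).symm.trans hp.tsum_eq_one)

theorem mem_of_pr_eq_one (hp : IsProb p) {S : Set Ω} (hS : Pr p S = 1) {ω : Ω}
    (hω : 0 < p ω) : ω ∈ S := by
  by_contra hωS
  have hind : ∑' ω, S.indicator p ω = 1 := by rw [← tsum_subtype]; exact hS
  have hlt : ∑' ω, S.indicator p ω < ∑' ω, p ω :=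
    (hp.summable.indicator S).tsum_lt_tsum (i := ω)
      (Set.indicator_le_self' fun ω _ => hp.1 ω)
      (by rwa [Set.indicator_of_notMem hωS]) hp.summable
  linarith [hp.tsum_eq_one]

theorem exists_pos_of_pr_pos (hp : IsProb p) {S : Set Ω} (hS : 0 < Pr p S) :
    ∃ ω ∈ S, 0 < p ω := by
  by_contra! h
  have hzero : ∀ ω : S, p ω = 0 := fun ω => le_antisymm (h ω ω.2) (hp.1 ω)
  exact hS.ne' (by simp only [Pr, hzero, tsum_zero])

end IsProb

theorem FuncOf.eq_of_pos {Ω α β : Type} {p : Ω → ℝ} (hp : IsProb p) {X : Ω → α} {Y : Ω → β}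
    (h : FuncOf p X Y) {ω ω' : Ω} (hω : 0 < p ω) (hω' : 0 < p ω') (hY : Y ω = Y ω') :
    X ω = X ω' := by
  obtain ⟨f, hf⟩ := h
  calc X ω = f (Y ω) := hp.mem_of_pr_eq_one hf hω
    _ = f (Y ω') := by rw [hY]
    _ = X ω' := (hp.mem_of_pr_eq_one hf hω').symm

theorem FuncOf.of_factorsThrough {Ω α β : Type} [Nonempty α] {p : Ω → ℝ} (hp : IsProb p)
    {X : Ω → α} {Y : Ω → β} (h : X.FactorsThrough Y) : FuncOf p X Y := by
  obtain ⟨f, rfl⟩ := (Function.factorsThrough_iff X).1 h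
  exact ⟨f, by simpa only [Function.comp_apply, Set.ofPred_true] using hp.2⟩

theorem mem_inEdges {es : List (ℕ × ℕ)} {v e : ℕ} :
    e ∈ inEdges es v ↔ ∃ u, es[e]? = some (u, v) := by
  by_cases he : e < es.length <;> simp [inEdges, he, Prod.ext_iff]

theorem mem_outEdges {es : List (ℕ × ℕ)} {v e : ℕ} :
    e ∈ outEdges es v ↔ ∃ w, es[e]? = some (v, w) := by
  by_cases he : e < es.length <;> simp [outEdges, he, Prod.ext_iff]

/-- A deterministic code over the alphabet `Fin q`: the signal `x e m` on the edge `e` is a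
function of the full tuple `m` of messages, and at every node the demanded messages and the
outgoing signals are determined by the accessible messages and the incoming signals. -/
def IsCode (net : Network) (q : ℕ) (x : ℕ → (ℕ → Fin q) → Fin q) : Prop :=
  match net with
  | (n, _, es, acc, dem) => ∀ v < n, ∀ m m' : ℕ → Fin q,
      (∀ i ∈ acc.getD v [], m i = m' i) → (∀ e ∈ inEdges es v, x e m = x e m') →
        (∀ i ∈ dem.getD v [], m i = m' i) ∧ ∀ e ∈ outEdges es v, x e m = x e m'

theorem lt_of_mem_getD {s : ℕ} {L : List (List ℕ)} (h : ∀ l ∈ L, ∀ i ∈ l, i < s) {v i : ℕ}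
    (hi : i ∈ L.getD v []) : i < s := by
  rw [List.getD_eq_getElem?_getD] at hi
  cases hv : L[v]? with
  | none => simp [hv] at hi
  | some l => exact h l (List.mem_of_getElem? hv) i (by simpa [hv] using hi)

theorem SolvableWith.exists_isCode {net : Network} {q : ℕ} (hq : 0 < q)
    (hnet : NetworkValid net) (hsol : SolvableWith net q) : ∃ x, IsCode net q x := by
  obtain ⟨n, s, es, acc, dem⟩ := net
  obtain ⟨-, -, -, -, hacc, hdem⟩ := hnet
  obtain ⟨Ω, p, hp, M, X, hM, hF⟩ := hsol
  have hsample : ∀ m : ℕ → Fin q, ∃ ω, (∀ i < s, M i ω = m i) ∧ 0 < p ω := fun m =>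
    hp.exists_pos_of_pr_pos (S := {ω | ∀ i < s, M i ω = m i}) (by rw [hM m]; positivity)
  choose ω hωM hωp using hsample
  refine ⟨fun e m => X e (ω m), fun v hv m m' hm hx => ?_⟩
  have hcode := (hF v hv).eq_of_pos hp (hωp m) (hωp m') <| Prod.ext
    (List.map_congr_left fun i hi => by
      have his := lt_of_mem_getD hacc hi
      rw [hωM m i his, hωM m' i his, hm i hi])
    (List.map_congr_left hx)
  obtain ⟨hdemand, hout⟩ := Prod.ext_iff.1 hcode
  refine ⟨fun i hi => ?_, List.map_inj_left.1 hout⟩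
  have his := lt_of_mem_getD hdem hi
  rw [← hωM m i his, ← hωM m' i his]
  exact List.map_inj_left.1 hdemand i hi

theorem isProb_uniform (α : Type) [Fintype α] [Nonempty α] :
    IsProb fun _ : α => (Fintype.card α : ℝ)⁻¹ := by
  refine ⟨fun _ => by positivity, ?_⟩
  rw [Pr, tsum_univ fun _ : α => (Fintype.card α : ℝ)⁻¹, tsum_fintype]
  simp

theorem IsCode.solvableWith {net : Network} {q : ℕ} (hq : 0 < q)
    {x : ℕ → (ℕ → Fin q) → Fin q} (hx : IsCode net q x) : SolvableWith net q := by
  obtain ⟨n, s, es, acc, dem⟩ := net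
  have : NeZero q := ⟨hq.ne'⟩
  have hprob := isProb_uniform (Fin s → Fin q)
  let M : ℕ → (Fin s → Fin q) → Fin q := fun i ω => if hi : i < s then ω ⟨i, hi⟩ else 0
  refine ⟨Fin s → Fin q, _, hprob, M, fun e ω => x e fun i => M i ω, fun m => ?_,
    fun v hv => FuncOf.of_factorsThrough hprob fun ω ω' hY => ?_⟩
  · have hpoint : {ω | ∀ i < s, M i ω = m i} = {fun i : Fin s => m i} := by
      ext ω
      simp only [Set.mem_ofPred_eq, Set.mem_singleton_iff, funext_iff, Fin.forall_iff, M]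
      exact forall₂_congr fun i hi => by rw [dif_pos hi]
    simp [hpoint, Pr]
  · obtain ⟨hacc, hin⟩ := Prod.ext_iff.1 hY
    obtain ⟨hdem, hout⟩ := hx v hv _ _ (List.map_inj_left.1 hacc) (List.map_inj_left.1 hin)
    exact Prod.ext (List.map_congr_left hdem) (List.map_congr_left hout)

/-! ### Networks of depth two -/

/-- A decoder of a depth-two network: the encoders it listens to, the messages it has access to,
and the messages it demands. -/
abbrev Decoder : Type := List ℕ × List ℕ × List ℕ

/-- The encoders whose signals the decoder receives. -/
@[simp] abbrev Decoder.inputs (d : Decoder) : List ℕ := d.1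

/-- The messages to which the decoder has direct access. -/
@[simp] abbrev Decoder.access (d : Decoder) : List ℕ := d.2.1

/-- The messages which the decoder demands. -/
@[simp] abbrev Decoder.demands (d : Decoder) : List ℕ := d.2.2

/-- The edges of the depth-two network with `V` encoders. A node may send different signals along
its outgoing edges, so encoder `v` has the single outgoing edge `v → V + v`, with index `v`, to a
relay, and the relay feeds the decoders, which are the nodes `2 * V + j`. -/
def depthTwoEdges (V : ℕ) (decs : List Decoder) : List (ℕ × ℕ) :=
  (List.range V).map (fun v => (v, V + v)) ++
    decs.zipIdx.flatMap fun dj => dj.1.inputs.map fun v => (V + v, 2 * V + dj.2)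

/-- The network with `s` messages whose `v`-th encoder sees the messages in `encs[v]`. -/
def depthTwoNetwork (s : ℕ) (encs : List (List ℕ)) (decs : List Decoder) : Network :=
  (2 * encs.length + decs.length, s, depthTwoEdges encs.length decs,
    encs ++ (List.replicate encs.length [] ++ decs.map Decoder.access),
    List.replicate (2 * encs.length) [] ++ decs.map Decoder.demands)

/-- All messages and encoders which are referred to exist. -/
def IsDepthTwo (s : ℕ) (encs : List (List ℕ)) (decs : List Decoder) : Prop :=
  (∀ l ∈ encs, ∀ i ∈ l, i < s) ∧ ∀ d ∈ decs, (∀ v ∈ d.inputs, v < encs.length) ∧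
    (∀ i ∈ d.access, i < s) ∧ ∀ i ∈ d.demands, i < s

/-- A solution of a depth-two network: `x v m` is the signal sent by the encoder `v`. -/
def IsDepthTwoCode (encs : List (List ℕ)) (decs : List Decoder) (q : ℕ)
    (x : ℕ → (ℕ → Fin q) → Fin q) : Prop :=
  (∀ v < encs.length, ∀ m m', (∀ i ∈ encs.getD v [], m i = m' i) → x v m = x v m') ∧
    ∀ d ∈ decs, ∀ m m', (∀ v ∈ d.inputs, x v m = x v m') → (∀ i ∈ d.access, m i = m' i) →
      ∀ i ∈ d.demands, m i = m' i

section DepthTwo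

variable {s : ℕ} {encs : List (List ℕ)} {decs : List Decoder}

theorem getElem?_depthTwoEdges_of_lt {V v : ℕ} (hv : v < V) :
    (depthTwoEdges V decs)[v]? = some (v, V + v) := by
  simp [depthTwoEdges, List.getElem?_append, hv]

theorem exists_getElem?_depthTwoEdges (V : ℕ) {j v : ℕ} {d : Decoder} (hj : decs[j]? = some d)
    (hv : v ∈ d.inputs) : ∃ e : ℕ, (depthTwoEdges V decs)[e]? = some (V + v, 2 * V + j) := by
  rw [← List.mem_iff_getElem?, depthTwoEdges, List.mem_append]
  exact Or.inr (List.mem_flatMap.2 ⟨(d, j), List.mem_zipIdx_iff_getElem?.2 hj,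
    List.mem_map.2 ⟨v, hv, rfl⟩⟩)

theorem eq_or_of_getElem?_depthTwoEdges {V e u w : ℕ}
    (he : (depthTwoEdges V decs)[e]? = some (u, w)) :
    (u < V ∧ w = V + u ∧ e = u) ∨
      ∃ j d v, decs[j]? = some d ∧ v ∈ d.inputs ∧ u = V + v ∧ w = 2 * V + j := by
  rcases lt_or_ge e V with heV | heV
  · rw [getElem?_depthTwoEdges_of_lt heV, Option.some.injEq, Prod.mk.injEq] at he
    obtain ⟨rfl, rfl⟩ := he
    exact Or.inl ⟨heV, rfl, rfl⟩
  · rw [depthTwoEdges, List.getElem?_append_right (by simpa using heV)] at he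
    obtain ⟨⟨d, j⟩, hj, hmem⟩ := List.mem_flatMap.1 (List.mem_of_getElem? he)
    obtain ⟨v, hv, huw⟩ := List.mem_map.1 hmem
    obtain ⟨rfl, rfl⟩ := Prod.mk.inj huw
    exact Or.inr ⟨j, d, v, List.mem_zipIdx_iff_getElem?.1 hj, hv, rfl, rfl⟩

theorem access_encoder {v : ℕ} (hv : v < encs.length) :
    (encs ++ (List.replicate encs.length [] ++ decs.map Decoder.access)).getD v [] =
      encs.getD v [] :=
  List.getD_append _ _ _ _ hv

theorem access_relay {v : ℕ} (hv : v < encs.length) :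
    (encs ++ (List.replicate encs.length [] ++ decs.map Decoder.access)).getD
      (encs.length + v) [] = [] := by
  simp [List.getElem?_append, hv]

theorem access_decoder {j : ℕ} {d : Decoder} (hj : decs[j]? = some d) :
    (encs ++ (List.replicate encs.length [] ++ decs.map Decoder.access)).getD
      (2 * encs.length + j) [] = d.access := by
  have hrelay : 2 * encs.length + j - encs.length = encs.length + j := by omega
  rw [List.getD_append_right _ _ _ _ (by omega), hrelay,
    List.getD_append_right _ _ _ _ (by simp)]
  simp [hj]

theorem demands_of_lt {V v : ℕ} (hv : v < 2 * V) :
    (List.replicate (2 * V) [] ++ decs.map Decoder.demands).getD v [] = [] := by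
  simp [List.getElem?_append, hv]

theorem demands_decoder {V j : ℕ} {d : Decoder} (hj : decs[j]? = some d) :
    (List.replicate (2 * V) [] ++ decs.map Decoder.demands).getD (2 * V + j) [] =
      d.demands := by
  rw [List.getD_append_right _ _ _ _ (by simp)]
  simp [hj]

theorem networkValid_depthTwoNetwork (h : IsDepthTwo s encs decs) :
    NetworkValid (depthTwoNetwork s encs decs) := by
  have hedge : ∀ e ∈ depthTwoEdges encs.length decs,
      e.1 < e.2 ∧ e.2 < 2 * encs.length + decs.length := by
    rintro ⟨u, w⟩ he
    obtain ⟨i, hi⟩ := List.mem_iff_getElem?.1 he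
    rcases eq_or_of_getElem?_depthTwoEdges hi with ⟨hu, rfl, -⟩ | ⟨j, d, v, hj, hv, rfl, rfl⟩
    · dsimp only; omega
    · have hvV := (h.2 d (List.mem_of_getElem? hj)).1 v hv
      have hjlt := (List.getElem?_eq_some_iff.1 hj).1
      dsimp only; omega
  refine ⟨fun e he => ⟨(hedge e he).1.trans (hedge e he).2, (hedge e he).2⟩,
    ⟨id, fun e he => (hedge e he).1⟩, ?_, by simp, fun l hl i hi => ?_, fun l hl i hi => ?_⟩
  · simp only [List.length_append, List.length_replicate, List.length_map]; omega
  · simp only [List.mem_append, List.mem_replicate, List.mem_map] at hl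
    rcases hl with hl | ⟨-, rfl⟩ | ⟨d, hd, rfl⟩
    · exact h.1 l hl i hi
    · simp at hi
    · exact (h.2 d hd).2.1 i hi
  · simp only [List.mem_append, List.mem_replicate, List.mem_map] at hl
    rcases hl with ⟨-, rfl⟩ | ⟨d, hd, rfl⟩
    · simp at hi
    · exact (h.2 d hd).2.2 i hi

theorem IsCode.depthTwo_encoder {q : ℕ} {x : ℕ → (ℕ → Fin q) → Fin q}
    (hx : IsCode (depthTwoNetwork s encs decs) q x) {v : ℕ} (hv : v < encs.length)
    {m m' : ℕ → Fin q} (hm : ∀ i ∈ encs.getD v [], m i = m' i) : x v m = x v m' := by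
  refine (hx v (by omega) m m' ?_ fun e he => ?_).2 v
    (mem_outEdges.2 ⟨_, getElem?_depthTwoEdges_of_lt hv⟩)
  · rwa [access_encoder hv]
  · obtain ⟨u, hu⟩ := mem_inEdges.1 he
    rcases eq_or_of_getElem?_depthTwoEdges hu with h' | ⟨j, d, v', h'⟩ <;> omega

theorem IsCode.depthTwo_relay {q : ℕ} {x : ℕ → (ℕ → Fin q) → Fin q}
    (hx : IsCode (depthTwoNetwork s encs decs) q x) {v e w : ℕ} (hv : v < encs.length)
    (he : (depthTwoEdges encs.length decs)[e]? = some (encs.length + v, w))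
    {m m' : ℕ → Fin q} (hm : x v m = x v m') : x e m = x e m' := by
  refine (hx (encs.length + v) (by omega) m m' ?_ fun e' he' => ?_).2 e (mem_outEdges.2 ⟨w, he⟩)
  · rw [access_relay hv]; simp
  · obtain ⟨u, hu⟩ := mem_inEdges.1 he'
    rcases eq_or_of_getElem?_depthTwoEdges hu with ⟨-, huv, rfl⟩ | ⟨j, d, v', h'⟩
    · rwa [← Nat.add_left_cancel huv]
    · omega

theorem IsCode.isDepthTwoCode (h : IsDepthTwo s encs decs) {q : ℕ}
    {x : ℕ → (ℕ → Fin q) → Fin q} (hx : IsCode (depthTwoNetwork s encs decs) q x) :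
    IsDepthTwoCode encs decs q x := by
  refine ⟨fun v hv m m' hm => hx.depthTwo_encoder hv hm, fun d hd m m' hsig hacc => ?_⟩
  obtain ⟨j, hj⟩ := List.mem_iff_getElem?.1 hd
  have hjlt := (List.getElem?_eq_some_iff.1 hj).1
  rw [← demands_decoder hj (V := encs.length)]
  refine (hx (2 * encs.length + j) (by omega) m m' ?_ fun e he => ?_).1
  · rwa [access_decoder hj]
  · obtain ⟨u, hu⟩ := mem_inEdges.1 he
    rcases eq_or_of_getElem?_depthTwoEdges hu with h' | ⟨j', d', v, hj', hv, rfl, hjj⟩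
    · omega
    · obtain rfl := Nat.add_left_cancel hjj
      obtain rfl : d = d' := Option.some.inj (hj.symm.trans hj')
      exact hx.depthTwo_relay ((h.2 d hd).1 v hv) hu (hsig v hv)

theorem IsDepthTwoCode.exists_isCode (h : IsDepthTwo s encs decs) {q : ℕ}
    {x : ℕ → (ℕ → Fin q) → Fin q} (hx : IsDepthTwoCode encs decs q x) :
    ∃ y, IsCode (depthTwoNetwork s encs decs) q y := by
  set V := encs.length
  let tail : ℕ → ℕ := fun e => ((depthTwoEdges V decs)[e]?.getD (0, 0)).1
  have htail : ∀ {e u w}, (depthTwoEdges V decs)[e]? = some (u, w) → tail e = u := fun he => by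
    simp only [tail, he, Option.getD_some]
  refine ⟨fun e => x (if tail e < V then tail e else tail e - V), fun v hv m m' hacc hin => ?_⟩
  rcases lt_or_ge v V with hvV | hVv
  · rw [access_encoder hvV] at hacc
    refine ⟨by rw [demands_of_lt (by omega)]; simp, fun e he => ?_⟩
    obtain ⟨w, hw⟩ := mem_outEdges.1 he
    simpa only [htail hw, if_pos hvV] using hx.1 v hvV m m' hacc
  obtain ⟨v, rfl⟩ := Nat.exists_eq_add_of_le hVv
  rcases lt_or_ge v V with hvV | hVv
  · refine ⟨by rw [demands_of_lt (by omega)]; simp, fun e he => ?_⟩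
    obtain ⟨w, hw⟩ := mem_outEdges.1 he
    have hv := getElem?_depthTwoEdges_of_lt (decs := decs) hvV
    have hsig := hin v (mem_inEdges.2 ⟨v, hv⟩)
    simpa only [htail hv, if_pos hvV, htail hw, Nat.not_lt.2 (Nat.le_add_right V v), if_false,
      Nat.add_sub_cancel_left] using hsig
  obtain ⟨j, rfl⟩ := Nat.exists_eq_add_of_le hVv
  rw [← add_assoc, ← two_mul] at hv hacc hin ⊢
  have hj : decs[j]? = some decs[j] := List.getElem?_eq_getElem _
  have hd := List.mem_of_getElem? hj
  rw [access_decoder hj] at hacc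
  rw [demands_decoder hj]
  refine ⟨hx.2 _ hd m m' (fun v hv => ?_) hacc, fun e he => ?_⟩
  · obtain ⟨e, he⟩ := exists_getElem?_depthTwoEdges V hj hv
    simpa only [htail he, Nat.not_lt.2 (Nat.le_add_right V v), if_false,
      Nat.add_sub_cancel_left] using hin e (mem_inEdges.2 ⟨_, he⟩)
  · obtain ⟨w, hw⟩ := mem_outEdges.1 he
    rcases eq_or_of_getElem?_depthTwoEdges hw with h' | ⟨j', d, v, hj', hv', huv, -⟩
    · omega
    · have := (h.2 d (List.mem_of_getElem? hj')).1 v hv'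
      omega

theorem solvableWith_depthTwoNetwork_iff (h : IsDepthTwo s encs decs) {q : ℕ} (hq : 0 < q) :
    SolvableWith (depthTwoNetwork s encs decs) q ↔ ∃ x, IsDepthTwoCode encs decs q x := by
  constructor
  · intro hsol
    obtain ⟨x, hx⟩ := hsol.exists_isCode hq (networkValid_depthTwoNetwork h)
    exact ⟨x, hx.isDepthTwoCode h⟩
  · rintro ⟨x, hx⟩
    obtain ⟨y, hy⟩ := hx.exists_isCode h
    exact hy.solvableWith hq

end DepthTwo

/-! ### Latin-square codes for systems of group equations -/

/-- The quadruple `(a, b, c, d)` stands for the equation `g a * g b = g c * g d`. -/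
abbrev Quad : Type := ℕ × ℕ × ℕ × ℕ

/-- The assignment `g` satisfies all equations of the list `qs`. -/
def SatisfiesQuads {G : Type} [Mul G] (g : ℕ → G) (qs : List Quad) : Prop :=
  ∀ a b c d, (a, b, c, d) ∈ qs → g a * g b = g c * g d

/-- The unknowns of `qs` and the distinguished unknown `w` have indices below `K`. -/
def IsQuadSystem (K : ℕ) (qs : List Quad) (w : ℕ) : Prop :=
  w < K ∧ ∀ a b c d, (a, b, c, d) ∈ qs → a < K ∧ b < K ∧ c < K ∧ d < K

/-- The signals `B x₀ x₁`, `C x₁ x₂` and `E x₀ x₂ x₃` determine the message `x₃`. -/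
def RecoversFourth {A : Type} (B C : A → A → A) (E : A → A → A → A) : Prop :=
  ∀ x₀ x₁ x₂ x₃ y₀ y₁ y₂ y₃, B x₀ x₁ = B y₀ y₁ → C x₁ x₂ = C y₁ y₂ →
    E x₀ x₂ x₃ = E y₀ y₂ y₃ → x₃ = y₃

/-- A code in the messages `x₀, x₁, x₂, x₃` that encodes the equations `qs` and the disequation
`g w ≠ g 0`. The Latin squares `left g` and `right g` have as level sets the graphs of permutations
representing `g`; the signal `check t` forces the two composites in the equation `t` to agree, and
`mix` forces the squares for `w` and `0` to be different. -/
structure LatinCode (K : ℕ) (qs : List Quad) (w : ℕ) (A : Type) where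
  /-- A function of the messages `x₀` and `x₁`. -/
  left : ℕ → A → A → A
  /-- A function of the messages `x₁` and `x₂`. -/
  right : ℕ → A → A → A
  /-- A function of the messages `x₀`, `x₂` and `x₃`. -/
  check : Quad → A → A → A → A
  /-- A function of the messages `x₀` and `x₂`. -/
  mix : A → A → A
  left_injective : ∀ g < K, ∀ x, Function.Injective (left g x)
  left_injective' : ∀ g < K, ∀ y, Function.Injective fun x => left g x y
  right_injective : ∀ g < K, ∀ x, Function.Injective (right g x)
  right_injective' : ∀ g < K, ∀ y, Function.Injective fun x => right g x y
  check_injective : ∀ t ∈ qs, ∀ x y, Function.Injective fun z => check t x z y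
  recovers_lhs : ∀ a b c d, (a, b, c, d) ∈ qs →
    RecoversFourth (left b) (right a) (check (a, b, c, d))
  recovers_rhs : ∀ a b c d, (a, b, c, d) ∈ qs →
    RecoversFourth (left d) (right c) (check (a, b, c, d))
  mix_fst : ∀ x₀ x₁ x₂ y₀ y₁ y₂, left 0 x₀ x₁ = left 0 y₀ y₁ → left w x₀ x₁ = left w y₀ y₁ →
    mix x₀ x₂ = mix y₀ y₂ → x₀ = y₀
  mix_snd : ∀ x₀ x₁ x₂ y₀ y₁ y₂, right 0 x₁ x₂ = right 0 y₁ y₂ → right w x₁ x₂ = right w y₁ y₂ →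
    mix x₀ x₂ = mix y₀ y₂ → x₂ = y₂

/-- The encoders for a system with `K` unknowns: `left g` is sent by the encoder `g`, `right g` by
`K + g`, `check` for the `j`-th equation by `2 * K + j`, and `mix` by the last encoder. -/
def quadEncoders (K : ℕ) (qs : List Quad) : List (List ℕ) :=
  List.replicate K [0, 1] ++
    (List.replicate K [1, 2] ++ (List.replicate qs.length [0, 2, 3] ++ [[0, 2]]))

/-- The decoders which make `left g` and `right g` Latin squares. -/
def squareDecoders (K g : ℕ) : List Decoder :=
  [([g], [0], [1]), ([g], [1], [0]), ([K + g], [1], [2]), ([K + g], [2], [1])]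

/-- The decoders for the equation `t`, which has position `j` in the system. -/
def equationDecoders (K : ℕ) (t : Quad) (j : ℕ) : List Decoder :=
  [([2 * K + j], [0, 3], [2]), ([t.2.1, K + t.1, 2 * K + j], [], [3]),
    ([t.2.2.2, K + t.2.2.1, 2 * K + j], [], [3])]

/-- The decoders which recover `x₀` and `x₂` with the help of `mix`, the encoder number `k`. -/
def mixDecoders (K w k : ℕ) : List Decoder :=
  [([0, w, k], [], [0]), ([K, K + w, k], [], [2])]

/-- The decoders of the network encoding the equations `qs` and the disequation `g w ≠ g 0`. -/
def quadDecoders (K : ℕ) (qs : List Quad) (w : ℕ) : List Decoder :=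
  (List.range K).flatMap (squareDecoders K) ++
    (qs.zipIdx.flatMap (fun tj => equationDecoders K tj.1 tj.2) ++
      mixDecoders K w (2 * K + qs.length))

/-- The network encoding the equations `qs` and the disequation `g w ≠ g 0`. -/
def quadNetwork (K : ℕ) (qs : List Quad) (w : ℕ) : Network :=
  depthTwoNetwork 4 (quadEncoders K qs) (quadDecoders K qs w)

theorem IsDepthTwoCode.injective_of_decoder {encs : List (List ℕ)} {decs : List Decoder} {q : ℕ}
    {x : ℕ → (ℕ → Fin q) → Fin q} (hx : IsDepthTwoCode encs decs q x) {v i : ℕ} {acc : List ℕ}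
    (hd : ([v], acc, [i]) ∈ decs) (f : Fin q → ℕ → Fin q)
    (hacc : ∀ k ∈ acc, ∀ a a', f a k = f a' k) (hi : ∀ a, f a i = a) :
    Function.Injective fun a => x v (f a) := by
  intro a a' haa
  rw [← hi a, ← hi a']
  exact hx.2 _ hd (f a) (f a') (by simpa using haa) (fun k hk => hacc k hk a a') i (by simp)

section QuadNetwork

variable {K : ℕ} {qs : List Quad} {w : ℕ}

theorem length_quadEncoders (K : ℕ) (qs : List Quad) :
    (quadEncoders K qs).length = 2 * K + qs.length + 1 := by
  simp only [quadEncoders, List.length_append, List.length_replicate, List.length_singleton]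
  omega

theorem quadEncoders_left (qs : List Quad) {g : ℕ} (hg : g < K) :
    (quadEncoders K qs).getD g [] = [0, 1] := by
  simp [quadEncoders, List.getElem?_append, hg]

theorem quadEncoders_right (qs : List Quad) {g : ℕ} (hg : g < K) :
    (quadEncoders K qs).getD (K + g) [] = [1, 2] := by
  simp [quadEncoders, List.getElem?_append, hg]

theorem quadEncoders_check (K : ℕ) {j : ℕ} (hj : j < qs.length) :
    (quadEncoders K qs).getD (2 * K + j) [] = [0, 2, 3] := by
  simp [quadEncoders, List.getElem?_append, hj, two_mul, add_assoc]

theorem quadEncoders_mix (K : ℕ) (qs : List Quad) :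
    (quadEncoders K qs).getD (2 * K + qs.length) [] = [0, 2] := by
  simp [quadEncoders, two_mul, add_assoc]

theorem isDepthTwo_quad (h : IsQuadSystem K qs w) :
    IsDepthTwo 4 (quadEncoders K qs) (quadDecoders K qs w) := by
  refine ⟨fun l hl => ?_, fun d hd => ?_⟩
  · simp only [quadEncoders, List.mem_append, List.mem_replicate, List.mem_singleton] at hl
    rcases hl with ⟨-, rfl⟩ | ⟨-, rfl⟩ | ⟨-, rfl⟩ | rfl <;> decide
  · have hw := h.1
    rw [length_quadEncoders]
    simp only [quadDecoders, List.mem_append, List.mem_flatMap, List.mem_range] at hd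
    rcases hd with ⟨g, hg, hd⟩ | ⟨⟨⟨a, b, c, d⟩, j⟩, hj, hd⟩ | hd
    · simp only [squareDecoders, List.mem_cons, List.not_mem_nil, or_false] at hd
      rcases hd with rfl | rfl | rfl | rfl <;> simp <;> omega
    · have hj := List.mem_zipIdx_iff_getElem?.1 hj
      have habcd := h.2 a b c d (List.mem_of_getElem? hj)
      have hjlt := (List.getElem?_eq_some_iff.1 hj).1
      simp only [equationDecoders, List.mem_cons, List.not_mem_nil, or_false] at hd
      rcases hd with rfl | rfl | rfl <;> simp <;> omega
    · simp only [mixDecoders, List.mem_cons, List.not_mem_nil, or_false] at hd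
      rcases hd with rfl | rfl <;> simp <;> omega

theorem networkValid_quadNetwork (h : IsQuadSystem K qs w) : NetworkValid (quadNetwork K qs w) :=
  networkValid_depthTwoNetwork (isDepthTwo_quad h)

theorem mem_quadDecoders_square {g : ℕ} (hg : g < K) {d : Decoder}
    (hd : d ∈ squareDecoders K g) : d ∈ quadDecoders K qs w :=
  List.mem_append_left _ (List.mem_flatMap.2 ⟨g, List.mem_range.2 hg, hd⟩)

theorem mem_quadDecoders_equation {t : Quad} {j : ℕ} (hj : qs[j]? = some t) {d : Decoder}
    (hd : d ∈ equationDecoders K t j) : d ∈ quadDecoders K qs w :=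
  List.mem_append_right _ <| List.mem_append_left _ <|
    List.mem_flatMap.2 ⟨(t, j), List.mem_zipIdx_iff_getElem?.2 hj, hd⟩

theorem mem_quadDecoders_mix {d : Decoder} (hd : d ∈ mixDecoders K w (2 * K + qs.length)) :
    d ∈ quadDecoders K qs w :=
  List.mem_append_right _ (List.mem_append_right _ hd)

/-- The tuple of the four messages `a`, `b`, `c`, `d`. -/
def fourMessages {A : Type} (a b c d : A) : ℕ → A
  | 0 => a
  | 1 => b
  | 2 => c
  | _ => d

namespace IsDepthTwoCode

variable {q : ℕ} {x : ℕ → (ℕ → Fin q) → Fin q}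
  (hx : IsDepthTwoCode (quadEncoders K qs) (quadDecoders K qs w) q x)

include hx

theorem quad_left {g : ℕ} (hg : g < K) (a b c d c' d' : Fin q) :
    x g (fourMessages a b c d) = x g (fourMessages a b c' d') := by
  refine hx.1 g (by rw [length_quadEncoders]; omega) _ _ ?_
  rw [quadEncoders_left qs hg]
  simp [fourMessages]

theorem quad_right {g : ℕ} (hg : g < K) (a b c d a' d' : Fin q) :
    x (K + g) (fourMessages a b c d) = x (K + g) (fourMessages a' b c d') := by
  refine hx.1 (K + g) (by rw [length_quadEncoders]; omega) _ _ ?_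
  rw [quadEncoders_right qs hg]
  simp [fourMessages]

theorem quad_check {j : ℕ} (hj : j < qs.length) (a b c d b' : Fin q) :
    x (2 * K + j) (fourMessages a b c d) = x (2 * K + j) (fourMessages a b' c d) := by
  refine hx.1 (2 * K + j) (by rw [length_quadEncoders]; omega) _ _ ?_
  rw [quadEncoders_check K hj]
  simp [fourMessages]

theorem quad_mix (a b c d b' d' : Fin q) :
    x (2 * K + qs.length) (fourMessages a b c d) =
      x (2 * K + qs.length) (fourMessages a b' c d') := by
  refine hx.1 _ (by rw [length_quadEncoders]; omega) _ _ ?_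
  rw [quadEncoders_mix K qs]
  simp [fourMessages]

theorem recoversFourth {a b j : ℕ} (o : Fin q) (ha : a < K) (hb : b < K) (hj : j < qs.length)
    (hd : ([b, K + a, 2 * K + j], [], [3]) ∈ quadDecoders K qs w) :
    RecoversFourth (fun x₀ x₁ => x b (fourMessages x₀ x₁ o o))
      (fun x₁ x₂ => x (K + a) (fourMessages o x₁ x₂ o))
      (fun x₀ x₂ x₃ => x (2 * K + j) (fourMessages x₀ o x₂ x₃)) := by
  intro x₀ x₁ x₂ x₃ y₀ y₁ y₂ y₃ hleft hright hcheck
  refine hx.2 _ hd (fourMessages x₀ x₁ x₂ x₃) (fourMessages y₀ y₁ y₂ y₃) ?_ (by simp) 3 (by simp)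
  simp only [List.forall_mem_cons, List.not_mem_nil, false_implies, implies_true, and_true]
  rw [hx.quad_left hb x₀ x₁ x₂ x₃ o o, hx.quad_left hb y₀ y₁ y₂ y₃ o o,
    hx.quad_right ha x₀ x₁ x₂ x₃ o o, hx.quad_right ha y₀ y₁ y₂ y₃ o o,
    hx.quad_check hj x₀ x₁ x₂ x₃ o, hx.quad_check hj y₀ y₁ y₂ y₃ o]
  exact ⟨hleft, hright, hcheck⟩

theorem quad_mix_fst (o : Fin q) (hw : w < K) (x₀ x₁ x₂ y₀ y₁ y₂ : Fin q)
    (hzero : x 0 (fourMessages x₀ x₁ o o) = x 0 (fourMessages y₀ y₁ o o))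
    (hleft : x w (fourMessages x₀ x₁ o o) = x w (fourMessages y₀ y₁ o o))
    (hmix : x (2 * K + qs.length) (fourMessages x₀ o x₂ o) =
      x (2 * K + qs.length) (fourMessages y₀ o y₂ o)) : x₀ = y₀ := by
  have hK : 0 < K := by omega
  refine hx.2 _ (mem_quadDecoders_mix List.mem_cons_self)
    (fourMessages x₀ x₁ x₂ o) (fourMessages y₀ y₁ y₂ o) ?_ (by simp) 0 (by simp)
  simp only [List.forall_mem_cons, List.not_mem_nil, false_implies, implies_true, and_true]
  rw [hx.quad_left hK x₀ x₁ x₂ o o o, hx.quad_left hK y₀ y₁ y₂ o o o,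
    hx.quad_left hw x₀ x₁ x₂ o o o, hx.quad_left hw y₀ y₁ y₂ o o o,
    hx.quad_mix x₀ x₁ x₂ o o o, hx.quad_mix y₀ y₁ y₂ o o o]
  exact ⟨hzero, hleft, hmix⟩

theorem quad_mix_snd (o : Fin q) (hw : w < K) (x₀ x₁ x₂ y₀ y₁ y₂ : Fin q)
    (hzero : x (K + 0) (fourMessages o x₁ x₂ o) = x (K + 0) (fourMessages o y₁ y₂ o))
    (hright : x (K + w) (fourMessages o x₁ x₂ o) = x (K + w) (fourMessages o y₁ y₂ o))
    (hmix : x (2 * K + qs.length) (fourMessages x₀ o x₂ o) =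
      x (2 * K + qs.length) (fourMessages y₀ o y₂ o)) : x₂ = y₂ := by
  have hK : 0 < K := by omega
  refine hx.2 ([K + 0, K + w, 2 * K + qs.length], [], [2])
    (mem_quadDecoders_mix (by simp [mixDecoders]))
    (fourMessages x₀ x₁ x₂ o) (fourMessages y₀ y₁ y₂ o) ?_ (by simp) 2 (by simp)
  simp only [List.forall_mem_cons, List.not_mem_nil, false_implies, implies_true, and_true]
  rw [hx.quad_right hK x₀ x₁ x₂ o o o, hx.quad_right hK y₀ y₁ y₂ o o o,
    hx.quad_right hw x₀ x₁ x₂ o o o, hx.quad_right hw y₀ y₁ y₂ o o o,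
    hx.quad_mix x₀ x₁ x₂ o o o, hx.quad_mix y₀ y₁ y₂ o o o]
  exact ⟨hzero, hright, hmix⟩

theorem nonempty_latinCode (h : IsQuadSystem K qs w) (o : Fin q) :
    Nonempty (LatinCode K qs w (Fin q)) := by
  have hidx : ∀ t ∈ qs, qs[qs.idxOf t]? = some t := fun t ht => List.getElem?_idxOf ht
  refine ⟨{
    left := fun g x₀ x₁ => x g (fourMessages x₀ x₁ o o)
    right := fun g x₁ x₂ => x (K + g) (fourMessages o x₁ x₂ o)
    check := fun t x₀ x₂ x₃ => x (2 * K + qs.idxOf t) (fourMessages x₀ o x₂ x₃)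
    mix := fun x₀ x₂ => x (2 * K + qs.length) (fourMessages x₀ o x₂ o)
    left_injective := fun g hg a => ?_
    left_injective' := fun g hg b => ?_
    right_injective := fun g hg b => ?_
    right_injective' := fun g hg c => ?_
    check_injective := fun t ht a d => ?_
    recovers_lhs := fun a b c d ht => ?_
    recovers_rhs := fun a b c d ht => ?_
    mix_fst := hx.quad_mix_fst o h.1
    mix_snd := hx.quad_mix_snd o h.1 }⟩
  · exact hx.injective_of_decoder (acc := [0]) (i := 1)
      (mem_quadDecoders_square hg (by simp [squareDecoders]))
      (fun b => fourMessages a b o o) (by simp [fourMessages]) fun _ => rfl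
  · exact hx.injective_of_decoder (acc := [1]) (i := 0)
      (mem_quadDecoders_square hg (by simp [squareDecoders]))
      (fun a => fourMessages a b o o) (by simp [fourMessages]) fun _ => rfl
  · exact hx.injective_of_decoder (acc := [1]) (i := 2)
      (mem_quadDecoders_square hg (by simp [squareDecoders]))
      (fun c => fourMessages o b c o) (by simp [fourMessages]) fun _ => rfl
  · exact hx.injective_of_decoder (acc := [2]) (i := 1)
      (mem_quadDecoders_square hg (by simp [squareDecoders]))
      (fun b => fourMessages o b c o) (by simp [fourMessages]) fun _ => rfl
  · exact hx.injective_of_decoder (acc := [0, 3]) (i := 2)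
      (mem_quadDecoders_equation (hidx t ht) (by simp [equationDecoders]))
      (fun c => fourMessages a o c d) (by simp [fourMessages]) fun _ => rfl
  · obtain ⟨ha, hb, -, -⟩ := h.2 a b c d ht
    exact hx.recoversFourth o ha hb (List.idxOf_lt_length_of_mem ht)
      (mem_quadDecoders_equation (hidx _ ht) (by simp [equationDecoders]))
  · obtain ⟨-, -, hc, hd⟩ := h.2 a b c d ht
    exact hx.recoversFourth o hc hd (List.idxOf_lt_length_of_mem ht)
      (mem_quadDecoders_equation (hidx _ ht) (by simp [equationDecoders]))

end IsDepthTwoCode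

namespace LatinCode

variable {A : Type} {q : ℕ}

/-- The signal sent by the encoder `v` when the alphabet `A` is identified with `Fin q`. -/
def signal (S : LatinCode K qs w A) (e : A ≃ Fin q) (v : ℕ) (m : ℕ → Fin q) : Fin q :=
  let r i := e.symm (m i)
  e <| if v < K then S.left v (r 0) (r 1)
    else if v < 2 * K then S.right (v - K) (r 1) (r 2)
    else match qs[v - 2 * K]? with
      | some t => S.check t (r 0) (r 2) (r 3)
      | none => S.mix (r 0) (r 2)

variable (S : LatinCode K qs w A) (e : A ≃ Fin q) (m : ℕ → Fin q)

theorem signal_left {g : ℕ} (hg : g < K) :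
    S.signal e g m = e (S.left g (e.symm (m 0)) (e.symm (m 1))) := by
  simp only [signal, if_pos hg]

theorem signal_right {g : ℕ} (hg : g < K) :
    S.signal e (K + g) m = e (S.right g (e.symm (m 1)) (e.symm (m 2))) := by
  simp only [signal, if_neg (show ¬K + g < K by omega), if_pos (show K + g < 2 * K by omega),
    Nat.add_sub_cancel_left]

theorem signal_check {t : Quad} {j : ℕ} (hj : qs[j]? = some t) :
    S.signal e (2 * K + j) m = e (S.check t (e.symm (m 0)) (e.symm (m 2)) (e.symm (m 3))) := by
  simp only [signal, if_neg (show ¬2 * K + j < K by omega),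
    if_neg (show ¬2 * K + j < 2 * K by omega), Nat.add_sub_cancel_left, hj]

theorem signal_mix :
    S.signal e (2 * K + qs.length) m = e (S.mix (e.symm (m 0)) (e.symm (m 2))) := by
  simp only [signal, if_neg (show ¬2 * K + qs.length < K by omega),
    if_neg (show ¬2 * K + qs.length < 2 * K by omega), Nat.add_sub_cancel_left,
    List.getElem?_length]

theorem signal_congr {v : ℕ} (hv : v < (quadEncoders K qs).length) {m m' : ℕ → Fin q}
    (hm : ∀ i ∈ (quadEncoders K qs).getD v [], m i = m' i) : S.signal e v m = S.signal e v m' := by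
  rw [length_quadEncoders] at hv
  rcases lt_or_ge v K with hvK | hvK
  · rw [quadEncoders_left qs hvK] at hm
    rw [signal_left _ _ _ hvK, signal_left _ _ _ hvK, hm 0 (by simp), hm 1 (by simp)]
  rcases lt_or_ge v (2 * K) with hv2K | hv2K
  · obtain ⟨g, rfl⟩ := Nat.exists_eq_add_of_le hvK
    have hg : g < K := by omega
    rw [quadEncoders_right qs hg] at hm
    rw [signal_right _ _ _ hg, signal_right _ _ _ hg, hm 1 (by simp), hm 2 (by simp)]
  obtain ⟨j, rfl⟩ := Nat.exists_eq_add_of_le hv2K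
  rcases lt_or_ge j qs.length with hj | hj
  · rw [quadEncoders_check K hj] at hm
    rw [signal_check _ _ _ (List.getElem?_eq_getElem hj),
      signal_check _ _ _ (List.getElem?_eq_getElem hj), hm 0 (by simp), hm 2 (by simp),
      hm 3 (by simp)]
  · obtain rfl : j = qs.length := by omega
    rw [quadEncoders_mix K qs] at hm
    rw [signal_mix, signal_mix, hm 0 (by simp), hm 2 (by simp)]

theorem signal_square {g : ℕ} (hg : g < K) {d : Decoder} (hd : d ∈ squareDecoders K g)
    {m m' : ℕ → Fin q} (hsig : ∀ v ∈ d.inputs, S.signal e v m = S.signal e v m')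
    (hacc : ∀ i ∈ d.access, m i = m' i) : ∀ i ∈ d.demands, m i = m' i := by
  simp only [squareDecoders, List.mem_cons, List.not_mem_nil, or_false] at hd
  rcases hd with rfl | rfl | rfl | rfl <;>
    simp only [Decoder.inputs, Decoder.access, Decoder.demands, List.mem_singleton, forall_eq,
      S.signal_left e _ hg, S.signal_right e _ hg, e.apply_eq_iff_eq] at hsig hacc ⊢ <;>
    rw [hacc] at hsig
  · exact e.symm.injective (S.left_injective g hg _ hsig)
  · exact e.symm.injective (S.left_injective' g hg _ hsig)
  · exact e.symm.injective (S.right_injective g hg _ hsig)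
  · exact e.symm.injective (S.right_injective' g hg _ hsig)

theorem signal_equation (h : IsQuadSystem K qs w) {t : Quad} {j : ℕ} (hj : qs[j]? = some t)
    {d : Decoder} (hd : d ∈ equationDecoders K t j) {m m' : ℕ → Fin q}
    (hsig : ∀ v ∈ d.inputs, S.signal e v m = S.signal e v m')
    (hacc : ∀ i ∈ d.access, m i = m' i) : ∀ i ∈ d.demands, m i = m' i := by
  obtain ⟨a, b, c, d⟩ := t
  have ht := List.mem_of_getElem? hj
  obtain ⟨haK, hbK, hcK, hdK⟩ := h.2 a b c d ht
  simp only [equationDecoders, List.mem_cons, List.not_mem_nil, or_false] at hd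
  rcases hd with rfl | rfl | rfl <;>
    simp only [Decoder.inputs, Decoder.access, Decoder.demands, List.mem_cons, List.not_mem_nil,
      or_false, forall_eq_or_imp, forall_eq, S.signal_check e _ hj, S.signal_left e _ hbK,
      S.signal_right e _ haK, S.signal_left e _ hdK, S.signal_right e _ hcK,
      e.apply_eq_iff_eq] at hsig hacc ⊢
  · rw [hacc.1, hacc.2] at hsig
    exact e.symm.injective (S.check_injective _ ht _ _ hsig)
  · exact e.symm.injective (S.recovers_lhs a b c d ht _ _ _ _ _ _ _ _ hsig.1 hsig.2.1 hsig.2.2)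
  · exact e.symm.injective (S.recovers_rhs a b c d ht _ _ _ _ _ _ _ _ hsig.1 hsig.2.1 hsig.2.2)

theorem signal_mixDecoders (hw : w < K) {d : Decoder}
    (hd : d ∈ mixDecoders K w (2 * K + qs.length)) {m m' : ℕ → Fin q}
    (hsig : ∀ v ∈ d.inputs, S.signal e v m = S.signal e v m') : ∀ i ∈ d.demands, m i = m' i := by
  have hK : 0 < K := by omega
  have hzero : ∀ m, S.signal e K m = e (S.right 0 (e.symm (m 1)) (e.symm (m 2))) :=
    fun m => S.signal_right e m hK
  simp only [mixDecoders, List.mem_cons, List.not_mem_nil, or_false] at hd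
  rcases hd with rfl | rfl <;>
    simp only [Decoder.inputs, Decoder.demands, List.mem_cons, List.not_mem_nil, or_false,
      forall_eq_or_imp, forall_eq, S.signal_mix, S.signal_left e _ hK, S.signal_left e _ hw, hzero,
      S.signal_right e _ hw, e.apply_eq_iff_eq] at hsig ⊢
  · exact e.symm.injective (S.mix_fst _ _ _ _ _ _ hsig.1 hsig.2.1 hsig.2.2)
  · exact e.symm.injective (S.mix_snd _ _ _ _ _ _ hsig.1 hsig.2.1 hsig.2.2)

theorem isDepthTwoCode_signal (h : IsQuadSystem K qs w) :
    IsDepthTwoCode (quadEncoders K qs) (quadDecoders K qs w) q (S.signal e) := by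
  refine ⟨fun v hv m m' hm => S.signal_congr e hv hm, fun d hd m m' hsig hacc => ?_⟩
  simp only [quadDecoders, List.mem_append, List.mem_flatMap, List.mem_range] at hd
  rcases hd with ⟨g, hg, hd⟩ | ⟨⟨t, j⟩, hj, hd⟩ | hd
  · exact S.signal_square e hg hd hsig hacc
  · exact S.signal_equation e h (List.mem_zipIdx_iff_getElem?.1 hj) hd hsig hacc
  · exact S.signal_mixDecoders e h.1 hd hsig

end LatinCode

theorem SolvableWith.nonempty_latinCode (h : IsQuadSystem K qs w) {q : ℕ} (hq : 0 < q)
    (hsol : SolvableWith (quadNetwork K qs w) q) : Nonempty (LatinCode K qs w (Fin q)) := by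
  obtain ⟨_, hx⟩ := (solvableWith_depthTwoNetwork_iff (isDepthTwo_quad h) hq).1 hsol
  exact hx.nonempty_latinCode h ⟨0, hq⟩

theorem LatinCode.solvableWith_quadNetwork (h : IsQuadSystem K qs w) {q : ℕ} (hq : 0 < q)
    {A : Type} (S : LatinCode K qs w A) (e : A ≃ Fin q) : SolvableWith (quadNetwork K qs w) q :=
  (solvableWith_depthTwoNetwork_iff (isDepthTwo_quad h) hq).2 ⟨_, S.isDepthTwoCode_signal e h⟩

end QuadNetwork

/-! ### Permutations from Latin-square codes -/

/-- The graph of `φ` is the level set of `B` through `(o, o)`. -/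
def IsLevelPerm {A : Type} (B : A → A → A) (o : A) (φ : Equiv.Perm A) : Prop :=
  φ o = o ∧ ∀ a, B a (φ a) = B o o

theorem exists_isLevelPerm {A : Type} [Finite A] {B : A → A → A}
    (hrow : ∀ x, Function.Injective (B x)) (hcol : ∀ y, Function.Injective fun x => B x y) (o : A) :
    ∃ φ, IsLevelPerm B o φ := by
  choose f hf using fun a => Finite.injective_iff_surjective.1 (hrow a) (B o o)
  have hinj : Function.Injective f := fun a a' haa =>
    hcol (f a) ((hf a).trans (by simp only [haa, hf a']))
  exact ⟨Equiv.ofBijective f (Finite.injective_iff_bijective.1 hinj), hrow o (hf o), hf⟩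

theorem IsLevelPerm.eq_of_right_eq {A : Type} {B : A → A → A} {o : A} {φ : Equiv.Perm A}
    (hφ : IsLevelPerm B o φ) (x y : A) : B x (φ x) = B y (φ y) :=
  (hφ.2 x).trans (hφ.2 y).symm

theorem RecoversFourth.check_eq {A : Type} [Finite A] {B C : A → A → A} {E : A → A → A → A}
    (h : RecoversFourth B C E) {o : A} {φ ψ : Equiv.Perm A} (hφ : IsLevelPerm B o φ)
    (hψ : IsLevelPerm C o ψ) (x : A) : E x ((ψ * φ) x) o = E o o o := by
  have hrec : ∀ x y z z', E x ((ψ * φ) x) z = E y ((ψ * φ) y) z' → z = z' := fun x y z z' hE =>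
    h x (φ x) _ z y (φ y) _ z' (hφ.eq_of_right_eq x y) (hψ.eq_of_right_eq _ _) hE
  obtain ⟨z, hz⟩ : ∃ z, E o ((ψ * φ) o) z = E x ((ψ * φ) x) o :=
    Finite.injective_iff_surjective.1 (fun z z' hzz => hrec o o z z' hzz) _
  obtain rfl : z = o := hrec _ _ _ _ hz
  rw [← hz, Equiv.Perm.mul_apply, hφ.1, hψ.1]

namespace LatinCode

variable {K : ℕ} {qs : List Quad} {w : ℕ} {A : Type} [Finite A] (S : LatinCode K qs w A)

include S

theorem mul_eq_mul {o : A} {a b c d : ℕ} (ht : (a, b, c, d) ∈ qs) {φ φ' ψ ψ' : Equiv.Perm A}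
    (hφ : IsLevelPerm (S.left b) o φ) (hφ' : IsLevelPerm (S.left d) o φ')
    (hψ : IsLevelPerm (S.right a) o ψ) (hψ' : IsLevelPerm (S.right c) o ψ') :
    ψ * φ = ψ' * φ' := by
  ext x
  exact S.check_injective _ ht x o (((S.recovers_lhs a b c d ht).check_eq hφ hψ x).trans
    ((S.recovers_rhs a b c d ht).check_eq hφ' hψ' x).symm)

theorem subsingleton_of_isLevelPerm {o : A} {φ ψ : Equiv.Perm A}
    (hφ₀ : IsLevelPerm (S.left 0) o φ) (hφ : IsLevelPerm (S.left w) o φ)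
    (hψ₀ : IsLevelPerm (S.right 0) o ψ) (hψ : IsLevelPerm (S.right w) o ψ) :
    Subsingleton A := by
  have hfst : ∀ x₀ x₂ y₀ y₂, S.mix x₀ x₂ = S.mix y₀ y₂ → x₀ = y₀ := fun x₀ x₂ y₀ y₂ hmix =>
    S.mix_fst x₀ (φ x₀) x₂ y₀ (φ y₀) y₂ (hφ₀.eq_of_right_eq _ _) (hφ.eq_of_right_eq _ _) hmix
  have hsnd : ∀ x₀ x₂ y₀ y₂, S.mix x₀ x₂ = S.mix y₀ y₂ → x₂ = y₂ := by
    intro x₀ x₂ y₀ y₂ hmix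
    obtain ⟨x₁, rfl⟩ := ψ.surjective x₂
    obtain ⟨y₁, rfl⟩ := ψ.surjective y₂
    exact S.mix_snd x₀ x₁ _ y₀ y₁ _ (hψ₀.eq_of_right_eq _ _) (hψ.eq_of_right_eq _ _) hmix
  have hcard := Nat.card_le_card_of_injective (fun z : A × A => S.mix z.1 z.2)
    fun z z' hz => Prod.ext (hfst _ _ _ _ hz) (hsnd _ _ _ _ hz)
  rw [Nat.card_prod] at hcard
  rw [← Finite.card_le_one_iff_subsingleton]
  by_contra! hlt
  nlinarith

theorem exists_isLevelPerm_left (o : A) :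
    ∃ φ : ℕ → Equiv.Perm A, ∀ g < K, IsLevelPerm (S.left g) o (φ g) := by
  have h : ∀ g, ∃ φ, g < K → IsLevelPerm (S.left g) o φ := fun g => by
    by_cases hg : g < K
    · obtain ⟨φ, hφ⟩ := exists_isLevelPerm (S.left_injective g hg) (S.left_injective' g hg) o
      exact ⟨φ, fun _ => hφ⟩
    · exact ⟨1, fun h => absurd h hg⟩
  choose φ hφ using h
  exact ⟨φ, hφ⟩

theorem exists_isLevelPerm_right (o : A) :
    ∃ ψ : ℕ → Equiv.Perm A, ∀ g < K, IsLevelPerm (S.right g) o (ψ g) := by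
  have h : ∀ g, ∃ ψ, g < K → IsLevelPerm (S.right g) o ψ := fun g => by
    by_cases hg : g < K
    · obtain ⟨ψ, hψ⟩ := exists_isLevelPerm (S.right_injective g hg) (S.right_injective' g hg) o
      exact ⟨ψ, fun _ => hψ⟩
    · exact ⟨1, fun h => absurd h hg⟩
  choose ψ hψ using h
  exact ⟨ψ, hψ⟩

/-- The equations `g a * g 0 = g 0 * g a` make `(ψ 0)⁻¹ * ψ a` and `φ a * (φ 0)⁻¹` equal, so that
one family of permutations serves both sides of a product. -/
theorem exists_perm [Nontrivial A] (h : IsQuadSystem K qs w)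
    (htie : ∀ g < K, (g, 0, 0, g) ∈ qs) :
    ∃ g : ℕ → Equiv.Perm A, g 0 = 1 ∧ SatisfiesQuads g qs ∧ g w ≠ 1 := by
  obtain ⟨o⟩ : Nonempty A := inferInstance
  obtain ⟨φ, hφ⟩ := S.exists_isLevelPerm_left o
  obtain ⟨ψ, hψ⟩ := S.exists_isLevelPerm_right o
  have h0 : 0 < K := (Nat.zero_le w).trans_lt h.1
  have hφψ : ∀ g < K, (ψ 0)⁻¹ * ψ g = φ g * (φ 0)⁻¹ := fun g hg => by
    rw [inv_mul_eq_iff_eq_mul, ← mul_assoc, eq_mul_inv_iff_mul_eq]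
    exact S.mul_eq_mul (htie g hg) (hφ 0 h0) (hφ g hg) (hψ g hg) (hψ 0 h0)
  refine ⟨fun g => (ψ 0)⁻¹ * ψ g, inv_mul_cancel _, fun a b c d ht => ?_, fun hw => ?_⟩
  · obtain ⟨ha, hb, hc, hd⟩ := h.2 a b c d ht
    have hmul := S.mul_eq_mul ht (hφ b hb) (hφ d hd) (hψ a ha) (hψ c hc)
    simp only [hφψ b hb, hφψ d hd]
    rw [mul_assoc, mul_assoc, ← mul_assoc (ψ a), ← mul_assoc (ψ c), hmul]
  · have hψw : ψ 0 = ψ w := inv_mul_eq_one.1 hw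
    have hφw : φ w = φ 0 := mul_inv_eq_one.1 ((hφψ w h.1).symm.trans hw)
    exact not_subsingleton A (S.subsingleton_of_isLevelPerm (hφ 0 h0) (hφw ▸ hφ w h.1) (hψ 0 h0)
      (hψw ▸ hψ w h.1))

end LatinCode

/-! ### Latin-square codes from finite groups -/

theorem exists_set_mem_iff_notMem {α : Type} {f : α → α} (hf : Function.Involutive f)
    (hne : ∀ x, f x ≠ x) : ∃ T : Set α, ∀ x, f x ∈ T ↔ x ∉ T := by
  refine ⟨{x | WellOrderingRel x (f x)}, fun x => ?_⟩
  simp only [Set.mem_ofPred_eq, hf x]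
  exact ⟨fun h h' => asymm h h', fun h =>
    (trichotomous_of WellOrderingRel (f x) x).resolve_right fun h' => h'.elim (hne x) h⟩

theorem eq_zero_of_comp_eq_of_forall_mem {α R : Type} [Zero R] {f : α → α} {z : α → R} {T : Set α}
    (hT : ∀ x, f x ∈ T ↔ x ∉ T) (hz : ∀ x, z (f x) = z x) (hzT : ∀ x ∈ T, z x = 0) : z = 0 := by
  funext x
  by_cases hx : x ∈ T
  · exact hzT x hx
  · exact (hz x).symm.trans (hzT _ ((hT x).2 hx))

theorem recoversFourth_sub {G A : Type} [Monoid G] [AddCommGroup A] (ρ : G →* AddMonoid.End A)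
    (a b : G) : RecoversFourth (fun x y => ρ b x - y) (fun x y => ρ a x - y)
      (fun x z y => ρ (a * b) x - z + y) := by
  intro x₀ x₁ x₂ x₃ y₀ y₁ y₂ y₃ hb ha hab
  have hρ := congrArg (ρ a) hb
  simp only [map_sub] at ha hρ
  simp only [map_mul, AddMonoid.End.coe_mul, Function.comp_apply] at hab
  linear_combination (norm := abel) hab - ha - hρ

theorem map_sub_eq_sub_of_sub_eq {A : Type} [AddCommGroup A] {ρ : AddMonoid.End A}
    {x₀ x₁ y₀ y₁ : A} (hone : x₀ - x₁ = y₀ - y₁) (hρ : ρ x₀ - x₁ = ρ y₀ - y₁) :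
    ρ (x₀ - y₀) = x₀ - y₀ := by
  rw [map_sub]
  linear_combination (norm := abel) hρ - hone

/-- The left regular representation of `G` on `R`-valued functions. -/
def leftTranslation (G R : Type) [Group G] [AddCommGroup R] : G →* AddMonoid.End (G → R) where
  toFun g :=
    { toFun := fun x h => x (g⁻¹ * h)
      map_zero' := rfl
      map_add' := fun _ _ => rfl }
  map_one' := DFunLike.ext _ _ fun x => funext fun h => congrArg x (by rw [inv_one, one_mul])
  map_mul' a b := DFunLike.ext _ _ fun x => funext fun h => congrArg x (by
    rw [mul_inv_rev, mul_assoc])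

theorem leftTranslation_apply {G R : Type} [Group G] [AddCommGroup R] (g h : G) (x : G → R) :
    leftTranslation G R g x h = x (g⁻¹ * h) := rfl

theorem injective_of_monoidHom {G A : Type} [Group G] [AddCommGroup A] (ρ : G →* AddMonoid.End A)
    (g : G) : Function.Injective (ρ g) :=
  Function.LeftInverse.injective (g := ρ g⁻¹) fun x => by
    rw [← Function.comp_apply (f := ρ g⁻¹), ← AddMonoid.End.coe_mul, ← map_mul, inv_mul_cancel,
      map_one, AddMonoid.End.coe_one, id]

theorem exists_mul_mem_iff_notMem {G : Type} [Group G] {u : G} (hu : u * u = 1) (hu1 : u ≠ 1) :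
    ∃ T : Set G, ∀ h, u * h ∈ T ↔ h ∉ T :=
  exists_set_mem_iff_notMem (fun h => by rw [← mul_assoc, hu, one_mul])
    fun _ hh => hu1 (mul_eq_right.1 hh)

theorem sub_apply_mul_of_leftTranslation_sub_eq {G R : Type} [Group G] [AddCommGroup R] {u : G}
    (hu : u * u = 1) {x₀ x₁ y₀ y₁ : G → R} (hone : x₀ - x₁ = y₀ - y₁)
    (hρ : leftTranslation G R u x₀ - x₁ = leftTranslation G R u y₀ - y₁) (h : G) :
    (x₀ - y₀) (u * h) = (x₀ - y₀) h := by
  have := congrFun (map_sub_eq_sub_of_sub_eq hone hρ) h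
  rwa [leftTranslation_apply, inv_eq_of_mul_eq_one_left hu] at this

/-- If the squares for `1` and for the involution `g w` do not distinguish two choices of the
messages, then the choices differ by `g w`-invariant functions. These are determined by their values
on a transversal `T` of the orbits of `g w`, and also by their values on the complement of `T`. -/
theorem nonempty_latinCode_of_involution (K : ℕ) {qs : List Quad} {w : ℕ} {G : Type} [Group G]
    (R : Type) [AddCommGroup R] {g : ℕ → G} (hone : g 0 = 1) (hg : SatisfiesQuads g qs)
    (hw : g w * g w = 1) (hw1 : g w ≠ 1) : Nonempty (LatinCode K qs w (G → R)) := by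
  obtain ⟨T, hT⟩ := exists_mul_mem_iff_notMem hw hw1
  have hTc : ∀ h, g w * h ∈ Tᶜ ↔ h ∉ Tᶜ := fun h => not_congr (hT h)
  let ρ := leftTranslation G R
  have hinv : ∀ x₀ x₁ y₀ y₁ : G → R, ρ (g 0) x₀ - x₁ = ρ (g 0) y₀ - y₁ →
      ρ (g w) x₀ - x₁ = ρ (g w) y₀ - y₁ →
      (∀ h, (x₀ - y₀) (g w * h) = (x₀ - y₀) h) ∧ x₁ - y₁ = x₀ - y₀ := by
    intro x₀ x₁ y₀ y₁ h0 hρ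
    rw [hone, map_one, AddMonoid.End.coe_one, id, id] at h0
    exact ⟨sub_apply_mul_of_leftTranslation_sub_eq hw h0 hρ,
      by linear_combination (norm := abel) -h0⟩
  exact ⟨{
    left := fun a x y => ρ (g a) x - y
    right := fun a x y => ρ (g a) x - y
    check := fun t x z y => ρ (g t.1 * g t.2.1) x - z + y
    mix := fun x z => T.piecewise x z
    left_injective := fun a _ x => sub_right_injective
    left_injective' := fun a _ y => sub_left_injective.comp (injective_of_monoidHom ρ _)
    right_injective := fun a _ x => sub_right_injective
    right_injective' := fun a _ y => sub_left_injective.comp (injective_of_monoidHom ρ _)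
    check_injective := fun t _ x y => (add_left_injective y).comp sub_right_injective
    recovers_lhs := fun a b c d _ => recoversFourth_sub ρ _ _
    recovers_rhs := fun a b c d ht => by
      simp only [hg a b c d ht]
      exact recoversFourth_sub ρ _ _
    mix_fst := fun x₀ x₁ x₂ y₀ y₁ y₂ h0 hρ hmix => by
      refine sub_eq_zero.1 (eq_zero_of_comp_eq_of_forall_mem hT (hinv _ _ _ _ h0 hρ).1 ?_)
      intro h hh
      simpa [hh, sub_eq_zero] using congrFun hmix h
    mix_snd := fun x₀ x₁ x₂ y₀ y₁ y₂ h0 hρ hmix => by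
      obtain ⟨hinv, hsub⟩ := hinv _ _ _ _ h0 hρ
      refine sub_eq_zero.1 (eq_zero_of_comp_eq_of_forall_mem hTc (hsub ▸ hinv) ?_)
      intro h hh
      simpa [show h ∉ T from hh, sub_eq_zero] using congrFun hmix h }⟩

theorem exists_perm_of_solvableWith_quadNetwork {K : ℕ} {qs : List Quad} {w : ℕ}
    (h : IsQuadSystem K qs w) (htie : ∀ g < K, (g, 0, 0, g) ∈ qs) {q : ℕ} (hq : 2 ≤ q)
    (hsol : SolvableWith (quadNetwork K qs w) q) :
    ∃ g : ℕ → Equiv.Perm (Fin q), g 0 = 1 ∧ SatisfiesQuads g qs ∧ g w ≠ 1 := by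
  have : Nontrivial (Fin q) := Fin.nontrivial_iff_two_le.2 hq
  obtain ⟨S⟩ := hsol.nonempty_latinCode h (by omega)
  exact S.exists_perm h htie

theorem exists_pow_solvableWith_quadNetwork {K : ℕ} {qs : List Quad} {w : ℕ}
    (h : IsQuadSystem K qs w) {c : ℕ} (hc : 0 < c) {G : Type} [Group G] [Finite G] {g : ℕ → G}
    (hone : g 0 = 1) (hg : SatisfiesQuads g qs) (hw : g w * g w = 1) (hw1 : g w ≠ 1) :
    ∃ m, 1 ≤ m ∧ SolvableWith (quadNetwork K qs w) (c ^ m) := by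
  have : NeZero c := ⟨hc.ne'⟩
  obtain ⟨S⟩ := nonempty_latinCode_of_involution K (ZMod c) hone hg hw hw1
  have hcard : Nat.card (G → ZMod c) = c ^ Nat.card G := by rw [Nat.card_fun, Nat.card_zmod]
  exact ⟨Nat.card G, Nat.card_pos,
    S.solvableWith_quadNetwork h (by positivity) (Finite.equivFinOfCardEq hcard)⟩

/-! ### Systems of equations with three factors on the right -/

/-- The quintuple `(a, b, c, d, e)` stands for the equation `g a * g b = g c * g d * g e`. -/
abbrev Quint : Type := ℕ × ℕ × ℕ × ℕ × ℕ

/-- The assignment `g` satisfies all equations of the list `fs`. -/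
def SatisfiesQuints {G : Type} [Mul G] (g : ℕ → G) (fs : List Quint) : Prop :=
  ∀ a b c d e, (a, b, c, d, e) ∈ fs → g a * g b = g c * g d * g e

/-- The unknowns of `fs` and the distinguished unknown `w` have indices below `K`. -/
def IsQuintSystem (K : ℕ) (fs : List Quint) (w : ℕ) : Prop :=
  w < K ∧ ∀ a b c d e, (a, b, c, d, e) ∈ fs → a < K ∧ b < K ∧ c < K ∧ d < K ∧ e < K

/-- The equation `t`, with `u` as a name for the product of its last two factors; the index `0`
stands for the identity. -/
def splitQuint (t : Quint) (u : ℕ) : List Quad :=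
  [(t.1, t.2.1, t.2.2.1, u), (u, 0, t.2.2.2.1, t.2.2.2.2)]

/-- The system `fs` rewritten with two factors on either side, together with the equations
`g a * g 0 = g 0 * g a`. The unknown `K + r` stands for the product of the last two factors of the
`r`-th equation. -/
def quintQuads (K : ℕ) (fs : List Quint) : List Quad :=
  fs.zipIdx.flatMap (fun tr => splitQuint tr.1 (K + tr.2)) ++
    (List.range (K + fs.length)).map fun g => (g, 0, 0, g)

/-- The network encoding the equations `fs` and the disequation `g w ≠ g 0`. -/
def quintNetwork (K : ℕ) (fs : List Quint) (w : ℕ) : Network :=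
  quadNetwork (K + fs.length) (quintQuads K fs) w

section QuintNetwork

variable {K : ℕ} {fs : List Quint} {w : ℕ}

theorem mem_quintQuads {t : Quad} :
    t ∈ quintQuads K fs ↔ (∃ s r, fs[r]? = some s ∧ t ∈ splitQuint s (K + r)) ∨
      ∃ g < K + fs.length, t = (g, 0, 0, g) := by
  simp only [quintQuads, List.mem_append, List.mem_flatMap, Prod.exists,
    List.mem_zipIdx_iff_getElem?, List.mem_map, List.mem_range, eq_comm (a := t)]

theorem isQuadSystem_quintQuads (h : IsQuintSystem K fs w) :
    IsQuadSystem (K + fs.length) (quintQuads K fs) w := by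
  refine ⟨h.1.trans_le (Nat.le_add_right _ _), fun a b c d ht => ?_⟩
  rcases mem_quintQuads.1 ht with ⟨⟨a', b', c', d', e'⟩, r, hr, ht⟩ | ⟨g, hg, heq⟩
  · have hlt := h.2 a' b' c' d' e' (List.mem_of_getElem? hr)
    have hrlt := (List.getElem?_eq_some_iff.1 hr).1
    simp only [splitQuint, List.mem_cons, Prod.mk.injEq, List.not_mem_nil, or_false] at ht
    omega
  · simp only [Prod.mk.injEq] at heq
    omega

theorem networkValid_quintNetwork (h : IsQuintSystem K fs w) :
    NetworkValid (quintNetwork K fs w) :=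
  networkValid_quadNetwork (isQuadSystem_quintQuads h)

theorem SatisfiesQuads.satisfiesQuints {G : Type} [Monoid G] {g : ℕ → G} (hone : g 0 = 1)
    (hg : SatisfiesQuads g (quintQuads K fs)) : SatisfiesQuints g fs := by
  intro a b c d e ht
  obtain ⟨r, hr⟩ := List.mem_iff_getElem?.1 ht
  have hprod : g (K + r) * g 0 = g d * g e :=
    hg _ _ _ _ (mem_quintQuads.2 (Or.inl ⟨_, r, hr, by simp [splitQuint]⟩))
  have hsplit : g a * g b = g c * g (K + r) :=
    hg _ _ _ _ (mem_quintQuads.2 (Or.inl ⟨_, r, hr, by simp [splitQuint]⟩))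
  rw [hone, mul_one] at hprod
  rw [hsplit, hprod, mul_assoc]

/-- The values of all unknowns of `quintQuads K fs`, from those of the unknowns of `fs`. -/
def extendToQuads {G : Type} [Mul G] (K : ℕ) (fs : List Quint) (g : ℕ → G) (i : ℕ) : G :=
  if i < K then g i else
    g (fs.getD (i - K) (0, 0, 0, 0, 0)).2.2.2.1 * g (fs.getD (i - K) (0, 0, 0, 0, 0)).2.2.2.2

theorem extendToQuads_of_lt {G : Type} [Mul G] (g : ℕ → G) {i : ℕ} (hi : i < K) :
    extendToQuads K fs g i = g i :=
  if_pos hi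

theorem extendToQuads_add {G : Type} [Mul G] (g : ℕ → G) {r a b c d e : ℕ}
    (hr : fs[r]? = some (a, b, c, d, e)) : extendToQuads K fs g (K + r) = g d * g e := by
  simp [extendToQuads, hr]

theorem SatisfiesQuints.satisfiesQuads_extendToQuads {G : Type} [Monoid G] {g : ℕ → G}
    (hone : g 0 = 1) (h : IsQuintSystem K fs w) (hg : SatisfiesQuints g fs) :
    SatisfiesQuads (extendToQuads K fs g) (quintQuads K fs) := by
  have hone' : extendToQuads K fs g 0 = 1 := by
    rw [extendToQuads_of_lt g ((Nat.zero_le w).trans_lt h.1), hone]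
  intro a b c d ht
  rcases mem_quintQuads.1 ht with ⟨⟨a', b', c', d', e'⟩, r, hr, ht⟩ | ⟨i, hi, heq⟩
  · obtain ⟨ha, hb, hc, hd, he⟩ := h.2 a' b' c' d' e' (List.mem_of_getElem? hr)
    have hmul := hg a' b' c' d' e' (List.mem_of_getElem? hr)
    simp only [splitQuint, List.mem_cons, Prod.mk.injEq, List.not_mem_nil, or_false] at ht
    rcases ht with ⟨rfl, rfl, rfl, rfl⟩ | ⟨rfl, rfl, rfl, rfl⟩
    · rw [extendToQuads_add g hr, extendToQuads_of_lt g ha, extendToQuads_of_lt g hb,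
        extendToQuads_of_lt g hc, hmul, mul_assoc]
    · rw [extendToQuads_add g hr, extendToQuads_of_lt g hd, extendToQuads_of_lt g he, hone',
        mul_one]
  · simp only [Prod.mk.injEq] at heq
    obtain ⟨rfl, rfl, rfl, rfl⟩ := heq
    rw [hone', mul_one, one_mul]

theorem exists_perm_of_solvableWith_quintNetwork (h : IsQuintSystem K fs w) {q : ℕ} (hq : 2 ≤ q)
    (hsol : SolvableWith (quintNetwork K fs w) q) :
    ∃ g : ℕ → Equiv.Perm (Fin q), g 0 = 1 ∧ SatisfiesQuints g fs ∧ g w ≠ 1 := by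
  obtain ⟨g, hone, hg, hw⟩ := exists_perm_of_solvableWith_quadNetwork (isQuadSystem_quintQuads h)
    (fun g hg => mem_quintQuads.2 (Or.inr ⟨g, hg, rfl⟩)) hq hsol
  exact ⟨g, hone, hg.satisfiesQuints hone, hw⟩

theorem exists_pow_solvableWith_quintNetwork (h : IsQuintSystem K fs w) {c : ℕ} (hc : 0 < c)
    {G : Type} [Group G] [Finite G] {g : ℕ → G} (hone : g 0 = 1) (hg : SatisfiesQuints g fs)
    (hw : g w * g w = 1) (hw1 : g w ≠ 1) :
    ∃ m, 1 ≤ m ∧ SolvableWith (quintNetwork K fs w) (c ^ m) := by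
  have h0 : extendToQuads K fs g 0 = g 0 :=
    extendToQuads_of_lt g ((Nat.zero_le w).trans_lt h.1)
  have hwg : extendToQuads K fs g w = g w := extendToQuads_of_lt g h.1
  exact exists_pow_solvableWith_quadNetwork (isQuadSystem_quintQuads h) hc (h0.trans hone)
    (hg.satisfiesQuads_extendToQuads hone h) (by rwa [hwg]) (by rwa [hwg])

end QuintNetwork

/-! ### Steinberg relations -/

/-- The triple `(a, b, c)` stands for the entry `a * b = c` of a partial multiplication table. -/
abbrev Triple : Type := ℕ × ℕ × ℕ

/-- `T` is a partial multiplication table for elements with names below `K`, in which `o` is listed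
as a two-sided identity. -/
structure IsTable (K : ℕ) (T : List Triple) (o : ℕ) : Prop where
  one_lt : o < K
  lt : ∀ a b c, (a, b, c) ∈ T → a < K ∧ b < K ∧ c < K
  one_mul : ∀ a < K, (o, a, a) ∈ T
  mul_one : ∀ a < K, (a, o, a) ∈ T

/-- The relations satisfied by the elementary matrices `E a i j = 1 + a • e i j` when the products
listed in `T` hold and `z` is zero. -/
structure IsSteinbergFamily {G : Type} [Group G] (K : ℕ) (T : List Triple) (z : ℕ)
    (E : ℕ → Fin 5 → Fin 5 → G) : Prop where
  mul : ∀ a b c, (a, b, c) ∈ T → ∀ i j k, i ≠ j → j ≠ k → i ≠ k →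
    E a i j * E b j k = E c i k * E b j k * E a i j
  commute : ∀ a < K, ∀ b < K, ∀ i j k l, i ≠ j → k ≠ l → j ≠ k → l ≠ i →
    Commute (E a i j) (E b k l)
  zero : ∀ i j, i ≠ j → E z i j = 1

/-- The unknown standing for `E a i j`; the unknown `0` is reserved for the identity. -/
def steinbergIndex (a : ℕ) (i j : Fin 5) : ℕ := 1 + 25 * a + 5 * i + j

/-- The positions occurring in the product relations. -/
def chainPositions : List (Fin 5 × Fin 5 × Fin 5) :=
  (Finset.univ.filter fun x : Fin 5 × Fin 5 × Fin 5 =>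
    x.1 ≠ x.2.1 ∧ x.2.1 ≠ x.2.2 ∧ x.1 ≠ x.2.2).toList

/-- The positions occurring in the commutation relations. -/
def commutingPositions : List (Fin 5 × Fin 5 × Fin 5 × Fin 5) :=
  (Finset.univ.filter fun x : Fin 5 × Fin 5 × Fin 5 × Fin 5 =>
    x.1 ≠ x.2.1 ∧ x.2.2.1 ≠ x.2.2.2 ∧ x.2.1 ≠ x.2.2.1 ∧ x.2.2.2 ≠ x.1).toList

/-- The off-diagonal positions. -/
def offDiagonalPositions : List (Fin 5 × Fin 5) :=
  (Finset.univ.filter fun x : Fin 5 × Fin 5 => x.1 ≠ x.2).toList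

/-- The product relation at the positions `x` for the table entry `t`. -/
def productQuint (t : Triple) (x : Fin 5 × Fin 5 × Fin 5) : Quint :=
  (steinbergIndex t.1 x.1 x.2.1, steinbergIndex t.2.1 x.2.1 x.2.2, steinbergIndex t.2.2 x.1 x.2.2,
    steinbergIndex t.2.1 x.2.1 x.2.2, steinbergIndex t.1 x.1 x.2.1)

/-- The commutation relation at the positions `x` for the elements `a` and `b`. -/
def commutationQuint (a b : ℕ) (x : Fin 5 × Fin 5 × Fin 5 × Fin 5) : Quint :=
  (steinbergIndex a x.1 x.2.1, steinbergIndex b x.2.2.1 x.2.2.2, 0,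
    steinbergIndex b x.2.2.1 x.2.2.2, steinbergIndex a x.1 x.2.1)

/-- The relations of `IsSteinbergFamily` as a system of equations. -/
def steinbergQuints (K : ℕ) (T : List Triple) (z : ℕ) : List Quint :=
  T.flatMap (fun t => chainPositions.map (productQuint t)) ++
    ((List.range K).flatMap (fun a => (List.range K).flatMap fun b =>
      commutingPositions.map (commutationQuint a b)) ++
    offDiagonalPositions.map fun x => (steinbergIndex z x.1 x.2, 0, 0, 0, 0))

/-- The network encoding the multiplication table `T` with zero `z` and the disequation `p ≠ z`. -/
def tableNetwork (K : ℕ) (T : List Triple) (z p : ℕ) : Network :=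
  quintNetwork (1 + 25 * K) (steinbergQuints K T z) (steinbergIndex p 0 4)

section TableNetwork

variable {K : ℕ} {T : List Triple} {o z p : ℕ}

theorem steinbergIndex_lt {a : ℕ} (ha : a < K) (i j : Fin 5) :
    steinbergIndex a i j < 1 + 25 * K := by
  unfold steinbergIndex
  omega

theorem mem_steinbergQuints {t : Quint} :
    t ∈ steinbergQuints K T z ↔
      (∃ a b c, (a, b, c) ∈ T ∧ ∃ i j k, (i ≠ j ∧ j ≠ k ∧ i ≠ k) ∧
        t = productQuint (a, b, c) (i, j, k)) ∨
      (∃ a < K, ∃ b < K, ∃ i j k l, (i ≠ j ∧ k ≠ l ∧ j ≠ k ∧ l ≠ i) ∧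
        t = commutationQuint a b (i, j, k, l)) ∨
      ∃ i j, i ≠ j ∧ t = (steinbergIndex z i j, 0, 0, 0, 0) := by
  simp only [steinbergQuints, chainPositions, commutingPositions, offDiagonalPositions,
    List.mem_append, List.mem_flatMap, List.mem_map, List.mem_range, Finset.mem_toList,
    Finset.mem_filter, Finset.mem_univ, true_and, Prod.exists, eq_comm (a := t)]

theorem isQuintSystem_steinbergQuints (h : IsTable K T o) (hz : z < K) (hp : p < K) :
    IsQuintSystem (1 + 25 * K) (steinbergQuints K T z) (steinbergIndex p 0 4) := by
  refine ⟨steinbergIndex_lt hp 0 4, fun a b c d e ht => ?_⟩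
  rcases mem_steinbergQuints.1 ht with ⟨a', b', c', habc, i, j, k, -, heq⟩ |
    ⟨a', ha, b', hb, i, j, k, l, -, heq⟩ | ⟨i, j, -, heq⟩
  · obtain ⟨ha, hb, hc⟩ := h.lt a' b' c' habc
    obtain ⟨rfl, rfl, rfl, rfl, rfl⟩ := heq
    exact ⟨steinbergIndex_lt ha i j, steinbergIndex_lt hb j k, steinbergIndex_lt hc i k,
      steinbergIndex_lt hb j k, steinbergIndex_lt ha i j⟩
  · obtain ⟨rfl, rfl, rfl, rfl, rfl⟩ := heq
    exact ⟨steinbergIndex_lt ha i j, steinbergIndex_lt hb k l, by omega,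
      steinbergIndex_lt hb k l, steinbergIndex_lt ha i j⟩
  · obtain ⟨rfl, rfl, rfl, rfl, rfl⟩ := heq
    exact ⟨steinbergIndex_lt hz i j, by omega, by omega, by omega, by omega⟩

theorem networkValid_tableNetwork (h : IsTable K T o) (hz : z < K) (hp : p < K) :
    NetworkValid (tableNetwork K T z p) :=
  networkValid_quintNetwork (isQuintSystem_steinbergQuints h hz hp)

theorem SatisfiesQuints.isSteinbergFamily {G : Type} [Group G] {g : ℕ → G} (hone : g 0 = 1)
    (hg : SatisfiesQuints g (steinbergQuints K T z)) :
    IsSteinbergFamily K T z fun a i j => g (steinbergIndex a i j) where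
  mul a b c habc i j k hij hjk hik :=
    hg _ _ _ _ _ (mem_steinbergQuints.2 (Or.inl ⟨a, b, c, habc, i, j, k, ⟨hij, hjk, hik⟩, rfl⟩))
  commute a ha b hb i j k l hij hkl hjk hli := by
    have := hg _ _ _ _ _ (mem_steinbergQuints.2
      (Or.inr (Or.inl ⟨a, ha, b, hb, i, j, k, l, ⟨hij, hkl, hjk, hli⟩, rfl⟩)))
    rwa [hone, one_mul] at this
  zero i j hij := by
    have := hg _ _ _ _ _ (mem_steinbergQuints.2 (Or.inr (Or.inr ⟨i, j, hij, rfl⟩)))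
    rwa [hone, mul_one, mul_one, mul_one] at this

/-- The assignment of the values `E a i j` to the unknowns `steinbergIndex a i j`. -/
def steinbergAssignment {G : Type} [One G] (E : ℕ → Fin 5 → Fin 5 → G) (n : ℕ) : G :=
  if n = 0 then 1 else E ((n - 1) / 25) (Fin.ofNat 5 ((n - 1) / 5)) (Fin.ofNat 5 (n - 1))

theorem steinbergAssignment_zero {G : Type} [One G] (E : ℕ → Fin 5 → Fin 5 → G) :
    steinbergAssignment E 0 = 1 :=
  if_pos rfl

theorem steinbergAssignment_index {G : Type} [One G] (E : ℕ → Fin 5 → Fin 5 → G) (a : ℕ)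
    (i j : Fin 5) : steinbergAssignment E (steinbergIndex a i j) = E a i j := by
  have ha : (steinbergIndex a i j - 1) / 25 = a := by unfold steinbergIndex; omega
  have hi : Fin.ofNat 5 ((steinbergIndex a i j - 1) / 5) = i := by
    ext; simp only [Fin.val_ofNat, steinbergIndex]; omega
  have hj : Fin.ofNat 5 (steinbergIndex a i j - 1) = j := by
    ext; simp only [Fin.val_ofNat, steinbergIndex]; omega
  rw [steinbergAssignment, if_neg (by unfold steinbergIndex; omega), ha, hi, hj]

theorem IsSteinbergFamily.satisfiesQuints {G : Type} [Group G] {E : ℕ → Fin 5 → Fin 5 → G}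
    (hE : IsSteinbergFamily K T z E) :
    SatisfiesQuints (steinbergAssignment E) (steinbergQuints K T z) := by
  intro a b c d e ht
  rcases mem_steinbergQuints.1 ht with ⟨a', b', c', habc, i, j, k, ⟨hij, hjk, hik⟩, heq⟩ |
    ⟨a', ha, b', hb, i, j, k, l, ⟨hij, hkl, hjk, hli⟩, heq⟩ | ⟨i, j, hij, heq⟩ <;>
  obtain ⟨rfl, rfl, rfl, rfl, rfl⟩ := heq
  · simp only [steinbergAssignment_index]
    exact hE.mul a' b' c' habc i j k hij hjk hik
  · simp only [steinbergAssignment_index, steinbergAssignment_zero, one_mul]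
    exact hE.commute a' ha b' hb i j k l hij hkl hjk hli
  · simp only [steinbergAssignment_index, steinbergAssignment_zero, mul_one]
    exact hE.zero i j hij

end TableNetwork

/-! ### From Steinberg relations to actions on a pointed set -/

open scoped commutatorElement

/-- Maps `act a` of a pointed set that fix the base point and satisfy the products listed in `T`,
such that `z` acts as zero and `o` as the identity. -/
structure PointedAction (K : ℕ) (T : List Triple) (z o : ℕ) (V : Type) where
  /-- The base point. -/
  zero : V
  /-- The map with the given name. -/
  act : ℕ → V → V
  act_act : ∀ a b c, (a, b, c) ∈ T → ∀ v, act a (act b v) = act c v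
  one_act : ∀ v, act o v = v
  zero_act : ∀ v, act z v = zero
  act_zero : ∀ a < K, act a zero = zero

section Commutators

variable {G : Type} [Group G]

theorem commute_commutatorElement {u x y : G} (hx : Commute u x) (hy : Commute u y) :
    Commute u ⁅x, y⁆ := by
  rw [commutatorElement_def]
  exact ((hx.mul_right hy).mul_right hx.inv_right).mul_right hy.inv_right

theorem mul_eq_commutatorElement_mul (x y : G) : x * y = ⁅x, y⁆ * y * x := by
  rw [commutatorElement_def]
  group

theorem commutatorElement_commutatorElement_right {x y z : G} (hxz : Commute x z)
    (hcd : Commute ⁅x, y⁆ ⁅y, z⁆) (hzd : Commute z ⁅y, z⁆) : ⁅x, ⁅y, z⁆⁆ = ⁅⁅x, y⁆, z⁆ := by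
  have hxy := mul_eq_commutatorElement_mul x y
  have hyz := mul_eq_commutatorElement_mul y z
  have hcz := mul_eq_commutatorElement_mul ⁅x, y⁆ z
  have hde : Commute ⁅y, z⁆ ⁅⁅x, y⁆, z⁆ := commute_commutatorElement hcd.symm hzd.symm
  generalize ⁅⁅x, y⁆, z⁆ = e at *
  generalize ⁅x, y⁆ = c at *
  generalize ⁅y, z⁆ = d at *
  have hmul : x * d * (z * y) = d * e * x * (z * y) := by
    calc x * d * (z * y) = x * (d * z * y) := by group
      _ = x * y * z := by rw [← hyz]; group
      _ = c * y * (x * z) := by rw [hxy]; group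
      _ = c * (y * z) * x := by rw [hxz.eq]; group
      _ = c * d * z * y * x := by rw [hyz]; group
      _ = d * (c * z) * y * x := by rw [hcd.eq]; group
      _ = d * e * z * (c * y * x) := by rw [hcz]; group
      _ = d * e * (z * x) * y := by rw [← hxy]; group
      _ = d * e * x * (z * y) := by rw [← hxz.eq]; group
  rw [commutatorElement_def, mul_right_cancel hmul, hde.eq]
  group

end Commutators

section Columns

variable {G : Type} [Group G] {E : ℕ → Fin 5 → Fin 5 → G} {K : ℕ} {T : List Triple} {o z : ℕ}

/-- The commutation relations satisfied by `τ i = 1 + v i • e i 4` for a column vector `v`: the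
group elements `τ` are a stand-in for `v`. -/
structure IsColumn (E : ℕ → Fin 5 → Fin 5 → G) (K o : ℕ) (τ : Fin 4 → G) : Prop where
  commute_elementary : ∀ a < K, ∀ i j k : Fin 4, i ≠ j → k ≠ j →
    Commute (E a i.castSucc j.castSucc) (τ k)
  commute : ∀ i j, Commute (τ i) (τ j)
  one_commutator : ∀ i j : Fin 4, i ≠ j → ⁅E o i.castSucc j.castSucc, τ j⁆ = τ i

/-- The column standing for `a • v` if `τ` stands for `v`. The row `i + 1` is an arbitrary choice of
a row other than `i`. -/
def columnAct (E : ℕ → Fin 5 → Fin 5 → G) (a : ℕ) (τ : Fin 4 → G) (i : Fin 4) : G :=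
  ⁅E a i.castSucc (i + 1).castSucc, τ (i + 1)⁆

theorem castSucc_ne_castSucc {n : ℕ} {i j : Fin n} (h : i ≠ j) : i.castSucc ≠ j.castSucc :=
  fun hij => h (Fin.castSucc_injective _ hij)

theorem exists_ne_ne_ne (i j k : Fin 4) : ∃ l, i ≠ l ∧ j ≠ l ∧ k ≠ l := by
  decide +revert

theorem ne_add_one_fin_four (i : Fin 4) : i ≠ i + 1 := by
  decide +revert

theorem castSucc_ne_four (i : Fin 4) : i.castSucc ≠ 4 := by
  decide +revert

theorem IsSteinbergFamily.commutator (hE : IsSteinbergFamily K T z E) {a b c : ℕ}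
    (ht : (a, b, c) ∈ T) {i j k : Fin 5} (hij : i ≠ j) (hjk : j ≠ k) (hik : i ≠ k) :
    ⁅E a i j, E b j k⁆ = E c i k := by
  rw [commutatorElement_def, hE.mul a b c ht i j k hij hjk hik]
  group

section Action

variable {τ : Fin 4 → G} (hE : IsSteinbergFamily K T z E) (hT : IsTable K T o)
  (hτ : IsColumn E K o τ)

include hE hT hτ

theorem IsColumn.commutator_eq_columnAct {a : ℕ} (ha : a < K) {i j : Fin 4} (hij : i ≠ j) :
    ⁅E a i.castSucc j.castSucc, τ j⁆ = columnAct E a τ i := by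
  rw [columnAct]
  by_cases hj : j = i + 1
  · rw [hj]
  · have hi := ne_add_one_fin_four i
    have hc : ⁅E a i.castSucc j.castSucc, E o j.castSucc (i + 1).castSucc⁆ =
        E a i.castSucc (i + 1).castSucc :=
      hE.commutator (hT.mul_one a ha) (castSucc_ne_castSucc hij) (castSucc_ne_castSucc hj)
        (castSucc_ne_castSucc hi)
    have hd := hτ.one_commutator j (i + 1) hj
    have key := commutatorElement_commutatorElement_right
      (hτ.commute_elementary a ha i j (i + 1) hij (Ne.symm hj))
      (by rw [hc, hd]; exact hτ.commute_elementary a ha i (i + 1) j hi hj)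
      (by rw [hd]; exact hτ.commute _ _)
    rwa [hc, hd] at key

theorem IsColumn.commute_columnAct {a : ℕ} (ha : a < K) (k i : Fin 4) :
    Commute (τ k) (columnAct E a τ i) := by
  obtain ⟨l, hkl, hil, -⟩ := exists_ne_ne_ne k i i
  rw [← hτ.commutator_eq_columnAct hE hT ha hil]
  exact commute_commutatorElement (hτ.commute_elementary a ha i l k hil hkl).symm
    (hτ.commute _ _)

theorem IsColumn.commute_elementary_columnAct {a b : ℕ} (ha : a < K) (hb : b < K)
    {i j k : Fin 4} (hij : i ≠ j) (hkj : k ≠ j) :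
    Commute (E b i.castSucc j.castSucc) (columnAct E a τ k) := by
  obtain ⟨l, hil, hjl, hkl⟩ := exists_ne_ne_ne i j k
  rw [← hτ.commutator_eq_columnAct hE hT ha hkl]
  exact commute_commutatorElement
    (hE.commute b hb a ha _ _ _ _ (castSucc_ne_castSucc hij) (castSucc_ne_castSucc hkl)
      (castSucc_ne_castSucc hkj.symm) (castSucc_ne_castSucc hil.symm))
    (hτ.commute_elementary b hb i j l hij hjl.symm)

theorem IsColumn.columnAct_commute_columnAct {a : ℕ} (ha : a < K) (i k : Fin 4) :
    Commute (columnAct E a τ i) (columnAct E a τ k) := by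
  by_cases hik : i = k
  · rw [hik]
  obtain ⟨j, hij, hkj, -⟩ := exists_ne_ne_ne i k k
  rw [← hτ.commutator_eq_columnAct hE hT ha hij]
  exact (commute_commutatorElement
    (hτ.commute_elementary_columnAct hE hT ha ha hij hkj).symm
    (hτ.commute_columnAct hE hT ha j k).symm).symm

theorem IsColumn.commutator_columnAct {a b c : ℕ} (ht : (a, b, c) ∈ T) {i j : Fin 4}
    (hij : i ≠ j) : ⁅E a i.castSucc j.castSucc, columnAct E b τ j⁆ = columnAct E c τ i := by
  obtain ⟨l, hil, hjl, -⟩ := exists_ne_ne_ne i j j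
  obtain ⟨ha, hb, hc⟩ := hT.lt a b c ht
  have hmul : ⁅E a i.castSucc j.castSucc, E b j.castSucc l.castSucc⁆ =
      E c i.castSucc l.castSucc :=
    hE.commutator ht (castSucc_ne_castSucc hij) (castSucc_ne_castSucc hjl)
      (castSucc_ne_castSucc hil)
  have hact := hτ.commutator_eq_columnAct hE hT hb hjl
  have key := commutatorElement_commutatorElement_right
    (hτ.commute_elementary a ha i j l hij hjl.symm)
    (by rw [hmul, hact]; exact hτ.commute_elementary_columnAct hE hT hb hc hil hjl)
    (by rw [hact]; exact hτ.commute_columnAct hE hT hb l j)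
  rwa [hmul, hact, hτ.commutator_eq_columnAct hE hT hc hil] at key

theorem IsColumn.isColumn_columnAct {a : ℕ} (ha : a < K) : IsColumn E K o (columnAct E a τ) where
  commute_elementary _ hb _ _ _ hij hkj := hτ.commute_elementary_columnAct hE hT ha hb hij hkj
  commute := hτ.columnAct_commute_columnAct hE hT ha
  one_commutator _ _ hij := hτ.commutator_columnAct hE hT (hT.one_mul a ha) hij

end Action

theorem isColumn_one (E : ℕ → Fin 5 → Fin 5 → G) (K o : ℕ) : IsColumn E K o 1 where
  commute_elementary _ _ _ _ _ _ _ := Commute.one_right _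
  commute _ _ := Commute.one_right _
  one_commutator _ _ _ := commutatorElement_one_right _

theorem IsSteinbergFamily.isColumn_one_elementary (hE : IsSteinbergFamily K T z E)
    (hT : IsTable K T o) : IsColumn E K o fun i => E o i.castSucc 4 where
  commute_elementary a ha i _ k hij hkj :=
    hE.commute a ha o hT.one_lt _ _ _ _ (castSucc_ne_castSucc hij) (castSucc_ne_four k)
      (castSucc_ne_castSucc hkj.symm) (castSucc_ne_four i).symm
  commute i j := hE.commute o hT.one_lt o hT.one_lt _ _ _ _ (castSucc_ne_four i)
    (castSucc_ne_four j) (castSucc_ne_four j).symm (castSucc_ne_four i).symm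
  one_commutator i j hij := hE.commutator (hT.one_mul o hT.one_lt) (castSucc_ne_castSucc hij)
    (castSucc_ne_four j) (castSucc_ne_four i)

/-- The action of the names on columns. -/
def IsSteinbergFamily.pointedAction (hE : IsSteinbergFamily K T z E) (hT : IsTable K T o)
    (hz : z < K) : PointedAction K T z o {τ : Fin 4 → G // IsColumn E K o τ} where
  zero := ⟨1, isColumn_one E K o⟩
  act a τ := if ha : a < K then ⟨columnAct E a τ.1, τ.2.isColumn_columnAct hE hT ha⟩ else τ
  act_act a b c ht τ := by
    obtain ⟨ha, hb, hc⟩ := hT.lt a b c ht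
    simp only [dif_pos ha, dif_pos hb, dif_pos hc, Subtype.mk.injEq]
    funext i
    exact τ.2.commutator_columnAct hE hT ht (ne_add_one_fin_four i)
  one_act τ := by
    rw [dif_pos hT.one_lt]
    ext i
    exact τ.2.one_commutator i (i + 1) (ne_add_one_fin_four i)
  zero_act τ := by
    rw [dif_pos hz, Subtype.mk.injEq]
    funext i
    rw [columnAct, hE.zero _ _ (castSucc_ne_castSucc (ne_add_one_fin_four i)),
      commutatorElement_one_left, Pi.one_apply]
  act_zero a ha := by
    rw [dif_pos ha, Subtype.mk.injEq]
    funext i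
    exact commutatorElement_one_right _

theorem IsSteinbergFamily.exists_act_ne_zero (hE : IsSteinbergFamily K T z E)
    (hT : IsTable K T o) (hz : z < K) {p : ℕ} (hp : p < K) (hp1 : E p 0 4 ≠ 1) :
    ∃ v, (hE.pointedAction hT hz).act p v ≠ (hE.pointedAction hT hz).zero := by
  refine ⟨⟨_, hE.isColumn_one_elementary hT⟩, fun h => hp1 ?_⟩
  simp only [pointedAction, dif_pos hp, Subtype.mk.injEq] at h
  rw [← hE.commutator (hT.mul_one p hp) (j := 1) (by decide) (by decide) (by decide)]
  exact congrFun h 0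

theorem exists_pointedAction_of_solvableWith_tableNetwork (hT : IsTable K T o) (hz : z < K) {p : ℕ}
    (hp : p < K) {q : ℕ} (hq : 2 ≤ q) (hsol : SolvableWith (tableNetwork K T z p) q) :
    ∃ (V : Type) (P : PointedAction K T z o V) (v : V), P.act p v ≠ P.zero := by
  obtain ⟨g, hone, hg, hp1⟩ :=
    exists_perm_of_solvableWith_quintNetwork (isQuintSystem_steinbergQuints hT hz hp) hq hsol
  obtain ⟨v, hv⟩ := (hg.isSteinbergFamily hone).exists_act_ne_zero hT hz hp hp1
  exact ⟨_, _, v, hv⟩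

end Columns

/-! ### From partial actions to elementary matrices -/

section ElementaryUnit

variable {n R : Type} [Fintype n] [Ring R]

theorem single_mul_single_eq_zero {i j k l : n} (hjk : j ≠ k) (r s : R) :
    Matrix.single i j r * Matrix.single k l s = 0 :=
  Matrix.single_mul_single_of_ne r i j k hjk s

/-- The elementary matrix `1 + r • e i j` as a unit; the junk value at `i = j` is `1`. -/
def elementaryUnit (i j : n) (r : R) : (Matrix n n R)ˣ :=
  if hij : i = j then 1 else
    { val := 1 + Matrix.single i j r
      inv := 1 - Matrix.single i j r
      val_inv := by
        have hsq := single_mul_single_eq_zero (i := i) (l := j) (Ne.symm hij) r r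
        linear_combination (norm := noncomm_ring) -hsq
      inv_val := by
        have hsq := single_mul_single_eq_zero (i := i) (l := j) (Ne.symm hij) r r
        linear_combination (norm := noncomm_ring) -hsq }

theorem val_elementaryUnit {i j : n} (hij : i ≠ j) (r : R) :
    (elementaryUnit i j r : Matrix n n R) = 1 + Matrix.single i j r := by
  rw [elementaryUnit, dif_neg hij]

theorem elementaryUnit_zero (i j : n) : elementaryUnit i j (0 : R) = 1 := by
  by_cases hij : i = j
  · exact dif_pos hij
  · ext1
    rw [val_elementaryUnit hij, Matrix.single_zero, add_zero, Units.val_one]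

theorem elementaryUnit_ne_one {i j : n} (hij : i ≠ j) {r : R} (hr : r ≠ 0) :
    elementaryUnit i j r ≠ 1 := by
  intro h
  have hval := congrArg (fun u : (Matrix n n R)ˣ => u.val i j) h
  simp only [val_elementaryUnit hij, Matrix.add_apply, Matrix.one_apply_ne hij,
    Matrix.single_apply_same, Units.val_one, zero_add] at hval
  exact hr hval

theorem elementaryUnit_mul_self {i j : n} (hij : i ≠ j) {r : R} (hr : r + r = 0) :
    elementaryUnit i j r * elementaryUnit i j r = 1 := by
  ext1
  have hsq := single_mul_single_eq_zero (i := i) (l := j) hij.symm r r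
  have hadd : Matrix.single i j r + Matrix.single i j r = 0 := by
    rw [← Matrix.single_add, hr, Matrix.single_zero]
  rw [Units.val_mul, val_elementaryUnit hij, Units.val_one]
  linear_combination (norm := noncomm_ring) hsq + hadd

theorem commute_elementaryUnit {i j k l : n} (hij : i ≠ j) (hkl : k ≠ l) (hjk : j ≠ k)
    (hli : l ≠ i) (r s : R) : Commute (elementaryUnit i j r) (elementaryUnit k l s) := by
  ext1
  have hrs := single_mul_single_eq_zero (i := i) (l := l) hjk r s
  have hsr := single_mul_single_eq_zero (i := k) (l := j) hli s r
  rw [Units.val_mul, Units.val_mul, val_elementaryUnit hij, val_elementaryUnit hkl]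
  linear_combination (norm := noncomm_ring) hrs - hsr

theorem elementaryUnit_mul_elementaryUnit {i j k : n} (hij : i ≠ j) (hjk : j ≠ k) (hik : i ≠ k)
    (r s : R) : elementaryUnit i j r * elementaryUnit j k s =
      elementaryUnit i k (r * s) * elementaryUnit j k s * elementaryUnit i j r := by
  ext1
  have hrs := Matrix.single_mul_single_same r i j k s
  have hsr := single_mul_single_eq_zero (i := j) (l := j) hik.symm s r
  have hrss := single_mul_single_eq_zero (i := i) (l := k) hjk.symm (r * s) s
  have hrsr := single_mul_single_eq_zero (i := i) (l := j) hik.symm (r * s) r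
  simp only [Units.val_mul, val_elementaryUnit hij, val_elementaryUnit hjk, val_elementaryUnit hik]
  linear_combination (norm := noncomm_ring)
    hrs - hsr - hrss - hrsr - hrss * Matrix.single i j r

theorem isSteinbergFamily_elementaryUnit {R : Type} [Ring R] {K z : ℕ} {T : List Triple}
    {φ : ℕ → R} (hmul : ∀ a b c, (a, b, c) ∈ T → φ a * φ b = φ c) (hzero : φ z = 0) :
    IsSteinbergFamily K T z fun a i j => elementaryUnit i j (φ a) where
  mul a b c ht _ _ _ hij hjk hik := by
    rw [← hmul a b c ht]
    exact elementaryUnit_mul_elementaryUnit hij hjk hik _ _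
  commute _ _ _ _ _ _ _ _ hij hkl hjk hli := commute_elementaryUnit hij hkl hjk hli _ _
  zero i j _ := by rw [hzero, elementaryUnit_zero]

end ElementaryUnit

/-- The partial maps `g a` satisfy the products listed in `T`, and `g z` is nowhere defined. As the
`g a` act from the right, the product `a * b` is `g a` followed by `g b`. -/
structure IsPartialAction {S : Type} (T : List Triple) (z : ℕ) (g : ℕ → S → Option S) : Prop where
  bind : ∀ a b c, (a, b, c) ∈ T → ∀ s, (g a s).bind (g b) = g c s
  zero : ∀ s, g z s = none

section Restrict

variable {S : Type} {p : S → Prop}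

/-- The restriction of the partial map `g` to a subset that it preserves. -/
def restrictPartial (g : S → Option S) (h : ∀ s r, g s = some r → p s → p r) (s : {s // p s}) :
    Option {s // p s} :=
  (g s).pmap Subtype.mk fun r hr => h s r hr s.2

theorem restrictPartial_eq_none_iff {g : S → Option S} {h : ∀ s r, g s = some r → p s → p r}
    {s : {s // p s}} : restrictPartial g h s = none ↔ g s = none :=
  Option.pmap_eq_none_iff

theorem map_val_restrictPartial {g : S → Option S} (h : ∀ s r, g s = some r → p s → p r)
    (s : {s // p s}) : (restrictPartial g h s).map Subtype.val = g s := by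
  rw [restrictPartial, Option.map_pmap, Option.pmap_eq_map, Option.map_id']

theorem IsPartialAction.restrict {T : List Triple} {z : ℕ} {g : ℕ → S → Option S}
    (hg : IsPartialAction T z g) (h : ∀ i s r, g i s = some r → p s → p r) :
    IsPartialAction T z fun i => restrictPartial (g i) (h i) where
  bind a b c ht s := by
    apply Option.map_injective Subtype.val_injective
    rw [map_val_restrictPartial, ← hg.bind a b c ht, ← map_val_restrictPartial (h a),
      Option.map_bind, Option.bind_map]
    exact congrArg _ (funext fun r => map_val_restrictPartial (h b) r)
  zero s := restrictPartial_eq_none_iff.2 (hg.zero s)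

end Restrict

/-- Precomposition with a partial map `g`, on functions extended by zero where `g` is undefined. -/
def pullback {S : Type} (g : S → Option S) : AddMonoid.End (S → ZMod 2) where
  toFun x s := (g s).elim 0 x
  map_zero' := by
    funext s
    cases g s <;> rfl
  map_add' x y := by
    funext s
    cases hs : g s <;> simp [hs]

section Pullback

variable {S : Type}

theorem pullback_mul_pullback (g h : S → Option S) :
    pullback g * pullback h = pullback fun s => (g s).bind h := by
  refine DFunLike.ext _ _ fun x => funext fun s => ?_
  change (g s).elim 0 (fun t => (h t).elim 0 x) = ((g s).bind h).elim 0 x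
  cases g s <;> rfl

theorem pullback_none : pullback (fun _ : S => none) = 0 :=
  rfl

theorem pullback_ne_zero {g : S → Option S} {s : S} (hs : g s ≠ none) : pullback g ≠ 0 := by
  obtain ⟨t, ht⟩ := Option.ne_none_iff_exists'.1 hs
  intro h
  have hval : (g s).elim 0 (1 : S → ZMod 2) = 0 := congrFun (DFunLike.congr_fun h 1) s
  rw [ht] at hval
  exact one_ne_zero hval

theorem pullback_add_self (g : S → Option S) : pullback g + pullback g = 0 :=
  DFunLike.ext _ _ fun _ => funext fun _ => CharTwo.add_self_eq_zero _

end Pullback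

theorem exists_pow_solvableWith_tableNetwork {K : ℕ} {T : List Triple} {o z p : ℕ}
    (hT : IsTable K T o) (hz : z < K) (hp : p < K) {c : ℕ} (hc : 0 < c) {S : Type} [Finite S]
    {g : ℕ → S → Option S} (hg : IsPartialAction T z g) (hgp : ∃ s, g p s ≠ none) :
    ∃ m, 1 ≤ m ∧ SolvableWith (tableNetwork K T z p) (c ^ m) := by
  obtain ⟨s, hs⟩ := hgp
  have : Finite (AddMonoid.End (S → ZMod 2)) := DFunLike.finite _
  have hmul : ∀ a b c, (a, b, c) ∈ T → pullback (g a) * pullback (g b) = pullback (g c) :=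
    fun a b c ht => by rw [pullback_mul_pullback, funext (hg.bind a b c ht)]
  have hzero : pullback (g z) = 0 := by rw [funext hg.zero, pullback_none]
  have hE := isSteinbergFamily_elementaryUnit (K := K) hmul hzero
  refine exists_pow_solvableWith_quintNetwork (isQuintSystem_steinbergQuints hT hz hp) hc
    (steinbergAssignment_zero _) hE.satisfiesQuints ?_ ?_ <;> rw [steinbergAssignment_index]
  · exact elementaryUnit_mul_self (by decide) (pullback_add_self _)
  · exact elementaryUnit_ne_one (by decide) (pullback_ne_zero hs)

/-! ### Stack machines and their relations -/

/-- An instruction of a machine with stacks `κ`, stack alphabet `Γ` and states `Q`; reading an empty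
stack yields `none`. -/
inductive Instruction (κ Γ Q : Type) : Type
  | push (k : κ) (γ : Γ) (q : Q)
  | pop (k : κ) (f : Option Γ → Q)
  | peek (k : κ) (f : Option Γ → Q)
  | jump (q : Q)
  | accept
  | reject

/-- A multi-stack machine that receives the number `n` as `n` copies of `mark` above a single
`endMark` on the stack `input`. -/
structure StackMachine (κ Γ Q : Type) where
  /-- The instruction executed in a given state. -/
  instruction : Q → Instruction κ Γ Q
  /-- The initial state. -/
  start : Q
  /-- The stack holding the input. -/
  input : κ
  /-- The symbol whose multiplicity is the input. -/
  mark : Γ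
  /-- The symbol below the marks. -/
  endMark : Γ

/-- A letter of the presentation encoding a machine: `state q` fixes the elements that represent a
configuration in state `q`, `push` and `pop` change a stack, `empty k` fixes the elements whose
stack `k` is empty, and the image of `blank` represents empty stacks. -/
inductive Letter (κ Γ Q : Type) : Type
  | state (q : Q)
  | push (k : κ) (γ : Γ)
  | pop (k : κ) (γ : Γ)
  | empty (k : κ)
  | blank

namespace StackMachine

variable {κ Γ Q : Type}

/-- One step of computation on a state and the contents of the stacks. -/
def step (M : StackMachine κ Γ Q) (c : Q × (κ → List Γ)) : Option (Q × (κ → List Γ)) :=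
  match M.instruction c.1 with
  | .push k γ q => some (q, Function.update c.2 k (γ :: c.2 k))
  | .pop k f => some (f (c.2 k).head?, Function.update c.2 k (c.2 k).tail)
  | .peek k f => some (f (c.2 k).head?, c.2)
  | .jump q => some (q, c.2)
  | .accept => none
  | .reject => none

/-- The configuration `c'` is reached from `c` in finitely many steps. -/
def Reaches (M : StackMachine κ Γ Q) : Q × (κ → List Γ) → Q × (κ → List Γ) → Prop :=
  Relation.ReflTransGen fun c c' => M.step c = some c'

/-- The stacks holding the input `n`. -/
def inputStacks (M : StackMachine κ Γ Q) (n : ℕ) : κ → List Γ :=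
  Function.update (fun _ => []) M.input (List.replicate n M.mark ++ [M.endMark])

/-- The machine reaches an accepting state on the input `n`. -/
def Accepts (M : StackMachine κ Γ Q) (n : ℕ) : Prop :=
  ∃ c, M.instruction c.1 = .accept ∧ M.Reaches (M.start, M.inputStacks n) c

/-- The machine reaches a rejecting state on the input `n`. -/
def Rejects (M : StackMachine κ Γ Q) (n : ℕ) : Prop :=
  ∃ c, M.instruction c.1 = .reject ∧ M.Reaches (M.start, M.inputStacks n) c

/-- The defining relations of the machine, as pairs of words. Words act from the left, so their last
letter acts first. -/
inductive Rel (M : StackMachine κ Γ Q) : List (Letter κ Γ Q) → List (Letter κ Γ Q) → Prop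
  | push_push (k k' γ γ') (h : k ≠ k') : M.Rel [.push k γ, .push k' γ'] [.push k' γ', .push k γ]
  | push_pop (k k' γ γ') (h : k ≠ k') : M.Rel [.push k γ, .pop k' γ'] [.pop k' γ', .push k γ]
  | pop_pop (k k' γ γ') (h : k ≠ k') : M.Rel [.pop k γ, .pop k' γ'] [.pop k' γ', .pop k γ]
  | empty_push (k k' γ') (h : k ≠ k') : M.Rel [.empty k, .push k' γ'] [.push k' γ', .empty k]
  | push (q k γ q') (h : M.instruction q = .push k γ q') :
      M.Rel [.state q', .push k γ, .state q] [.push k γ, .state q]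
  | pop_push (q k γ q') (h : M.instruction q = .push k γ q') :
      M.Rel [.pop k γ, .push k γ, .state q] [.state q]
  | pop (q k f γ) (h : M.instruction q = .pop k f) :
      M.Rel [.state (f (some γ)), .pop k γ, .state q] [.pop k γ, .state q]
  | pop_empty (q k f) (h : M.instruction q = .pop k f) :
      M.Rel [.state (f none), .empty k, .state q] [.empty k, .state q]
  | peek (q k f γ) (h : M.instruction q = .peek k f) :
      M.Rel [.state (f (some γ)), .push k γ, .pop k γ, .state q] [.push k γ, .pop k γ, .state q]
  | peek_empty (q k f) (h : M.instruction q = .peek k f) :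
      M.Rel [.state (f none), .empty k, .state q] [.empty k, .state q]
  | jump (q q') (h : M.instruction q = .jump q') : M.Rel [.state q', .state q] [.state q]
  | empty_blank (k) : M.Rel [.empty k, .blank] [.blank]
  | pop_push_blank :
      M.Rel [.pop M.input M.endMark, .push M.input M.endMark, .blank] [.blank]

variable {M : StackMachine κ Γ Q}

theorem Rel.length_le {l r : List (Letter κ Γ Q)} (h : M.Rel l r) :
    l.length ≤ 4 ∧ r.length ≤ 4 := by
  cases h <;> simp

theorem inputStacks_input (n : ℕ) :
    M.inputStacks n M.input = List.replicate n M.mark ++ [M.endMark] :=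
  Function.update_self ..

theorem inputStacks_zero :
    M.inputStacks 0 = Function.update (fun _ => []) M.input [M.endMark] :=
  rfl

theorem inputStacks_succ (n : ℕ) : M.inputStacks (n + 1) =
    Function.update (M.inputStacks n) M.input (M.mark :: M.inputStacks n M.input) := by
  simp [inputStacks, List.replicate_succ]

end StackMachine

/-! ### Actions of the letters exclude rejection -/

namespace StackMachine

variable {κ Γ Q V : Type} {M : StackMachine κ Γ Q} {A : Letter κ Γ Q → V → V} {zero : V}

/-- The action `A` of the letters satisfies the defining relations and fixes the base point. -/
structure Respects (M : StackMachine κ Γ Q) (A : Letter κ Γ Q → V → V) (zero : V) : Prop where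
  foldr_eq : ∀ l r, M.Rel l r → ∀ v, l.foldr A v = r.foldr A v
  map_zero : ∀ x, A x zero = zero

/-- The element `u` represents the stack contents `s`: `push` undoes `pop` on the nonempty stacks,
all the way down to the empty ones. -/
inductive Represents (A : Letter κ Γ Q → V → V) : V → (κ → List Γ) → Prop
  | mk (u : V) (s : κ → List Γ) (empty : ∀ k, s k = [] → A (.empty k) u = u)
      (push_pop : ∀ k γ r, s k = γ :: r → A (.push k γ) (A (.pop k γ) u) = u)
      (pop : ∀ k γ r, s k = γ :: r → Represents A (A (.pop k γ) u) (Function.update s k r)) :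
      Represents A u s

theorem Represents.empty_eq {u : V} {s : κ → List Γ} (h : Represents A u s) {k : κ}
    (hk : s k = []) : A (.empty k) u = u := by
  cases h with
  | mk _ _ empty _ _ => exact empty k hk

theorem Represents.push_pop_eq {u : V} {s : κ → List Γ} (h : Represents A u s) {k : κ} {γ : Γ}
    {r : List Γ} (hk : s k = γ :: r) : A (.push k γ) (A (.pop k γ) u) = u := by
  cases h with
  | mk _ _ _ push_pop _ => exact push_pop k γ r hk

theorem Represents.pop_represents {u : V} {s : κ → List Γ} (h : Represents A u s) {k : κ} {γ : Γ}
    {r : List Γ} (hk : s k = γ :: r) :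
    Represents A (A (.pop k γ) u) (Function.update s k r) := by
  cases h with
  | mk _ _ _ _ pop => exact pop k γ r hk

theorem Respects.push_represents (hA : M.Respects A zero) {u : V} {s : κ → List Γ}
    (h : Represents A u s) {k : κ} {γ : Γ} (hpp : A (.pop k γ) (A (.push k γ) u) = u) :
    Represents A (A (.push k γ) u) (Function.update s k (γ :: s k)) := by
  induction h with
  | mk u s empty push_pop pop ih =>
    refine .mk _ _ (fun k' hk' => ?_) (fun k' δ r hk' => ?_) fun k' δ r hk' => ?_ <;>
      rcases eq_or_ne k' k with rfl | hkk
    · simp only [Function.update_self, reduceCtorEq] at hk'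
    · rw [Function.update_of_ne hkk] at hk'
      have hcomm := hA.foldr_eq _ _ (.empty_push k' k γ hkk) u
      simp only [List.foldr] at hcomm
      rw [hcomm, empty k' hk']
    · simp only [Function.update_self, List.cons.injEq] at hk'
      rw [← hk'.1, hpp]
    · rw [Function.update_of_ne hkk] at hk'
      have hpop := hA.foldr_eq _ _ (.push_pop k k' γ δ hkk.symm) u
      have hpush := hA.foldr_eq _ _ (.push_push k' k δ γ hkk) (A (.pop k' δ) u)
      simp only [List.foldr] at hpop hpush
      rw [← hpop, hpush, push_pop k' δ r hk']
    · simp only [Function.update_self, List.cons.injEq] at hk'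
      rw [← hk'.1, ← hk'.2, hpp, Function.update_idem, Function.update_eq_self]
      exact .mk u s empty push_pop pop
    · rw [Function.update_of_ne hkk] at hk'
      have hpop := hA.foldr_eq _ _ (.push_pop k k' γ δ hkk.symm) u
      have hpop' := hA.foldr_eq _ _ (.pop_pop k k' γ δ hkk.symm) (A (.push k γ) u)
      simp only [List.foldr] at hpop hpop'
      have hrep := ih k' δ r hk' (by rw [hpop, hpop', hpp])
      rwa [hpop, Function.update_of_ne hkk.symm, Function.update_comm hkk] at hrep

/-- Some element other than the base point represents the configuration `c`. -/
def Tracks (A : Letter κ Γ Q → V → V) (zero : V) (c : Q × (κ → List Γ)) : Prop :=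
  ∃ u, Represents A u c.2 ∧ A (.state c.1) u = u ∧ u ≠ zero

section Step

variable {q : Q} {s : κ → List Γ}

theorem Respects.tracks_push (hA : M.Respects A zero) {k : κ} {γ : Γ} {q' : Q}
    (hq : M.instruction q = .push k γ q') (h : Tracks A zero (q, s)) :
    Tracks A zero (q', Function.update s k (γ :: s k)) := by
  obtain ⟨u, hu, hstate, hne⟩ := h
  have hpush := hA.foldr_eq _ _ (.push q k γ q' hq) u
  have hpp := hA.foldr_eq _ _ (.pop_push q k γ q' hq) u
  simp only [List.foldr, hstate] at hpush hpp
  refine ⟨A (.push k γ) u, hA.push_represents hu hpp, hpush, fun h => hne ?_⟩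
  rw [← hpp, h, hA.map_zero]

theorem Respects.tracks_pop (hA : M.Respects A zero) {k : κ} {f : Option Γ → Q}
    (hq : M.instruction q = .pop k f) (h : Tracks A zero (q, s)) :
    Tracks A zero (f (s k).head?, Function.update s k (s k).tail) := by
  obtain ⟨u, hu, hstate, hne⟩ := h
  cases hk : s k with
  | nil =>
    have hpop := hA.foldr_eq _ _ (.pop_empty q k f hq) u
    simp only [List.foldr, hstate, hu.empty_eq hk] at hpop
    refine ⟨u, ?_, hpop, hne⟩
    rwa [List.tail_nil, ← hk, Function.update_eq_self]
  | cons γ r =>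
    have hpop := hA.foldr_eq _ _ (.pop q k f γ hq) u
    simp only [List.foldr, hstate] at hpop
    refine ⟨_, hu.pop_represents hk, hpop, fun h => hne ?_⟩
    rw [← hu.push_pop_eq hk, h, hA.map_zero]

theorem Respects.tracks_peek (hA : M.Respects A zero) {k : κ} {f : Option Γ → Q}
    (hq : M.instruction q = .peek k f) (h : Tracks A zero (q, s)) :
    Tracks A zero (f (s k).head?, s) := by
  obtain ⟨u, hu, hstate, hne⟩ := h
  refine ⟨u, hu, ?_, hne⟩
  cases hk : s k with
  | nil =>
    have hpeek := hA.foldr_eq _ _ (.peek_empty q k f hq) u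
    simp only [List.foldr, hstate, hu.empty_eq hk] at hpeek
    exact hpeek
  | cons γ r =>
    have hpeek := hA.foldr_eq _ _ (.peek q k f γ hq) u
    simp only [List.foldr, hstate, hu.push_pop_eq hk] at hpeek
    exact hpeek

theorem Respects.tracks_jump (hA : M.Respects A zero) {q' : Q}
    (hq : M.instruction q = .jump q') (h : Tracks A zero (q, s)) : Tracks A zero (q', s) := by
  obtain ⟨u, hu, hstate, hne⟩ := h
  have hjump := hA.foldr_eq _ _ (.jump q q' hq) u
  simp only [List.foldr, hstate] at hjump
  exact ⟨u, hu, hjump, hne⟩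

end Step

theorem Respects.tracks_step (hA : M.Respects A zero) {c c' : Q × (κ → List Γ)}
    (hstep : M.step c = some c') (h : Tracks A zero c) : Tracks A zero c' := by
  unfold step at hstep
  split at hstep <;> cases hstep
  case h_1 hq => exact hA.tracks_push hq h
  case h_2 hq => exact hA.tracks_pop hq h
  case h_3 hq => exact hA.tracks_peek hq h
  case h_4 hq => exact hA.tracks_jump hq h

theorem Respects.tracks_of_reaches (hA : M.Respects A zero) {c c' : Q × (κ → List Γ)}
    (hreach : M.Reaches c c') (h : Tracks A zero c) : Tracks A zero c' := by
  induction hreach with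
  | refl => exact h
  | tail _ hstep ih => exact hA.tracks_step hstep ih

/-- The elements `level 0, …, level n` lead from the representative of the input `n` in the start
state down to that of the input `0`. -/
structure IsInputChain (M : StackMachine κ Γ Q) (A : Letter κ Γ Q → V → V) (v : V) (n : ℕ)
    (level : ℕ → V) : Prop where
  start : A (.state M.start) (level 0) = level 0
  push_mark : ∀ i < n, A (.push M.input M.mark) (level (i + 1)) = level i
  pop_mark : ∀ i < n, A (.pop M.input M.mark) (level i) = level (i + 1)
  last : level n = A (.push M.input M.endMark) (A .blank v)

theorem Respects.blank_represents (hA : M.Respects A zero) (v : V) :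
    Represents A (A .blank v) fun _ => [] :=
  .mk _ _ (fun k _ => hA.foldr_eq _ _ (.empty_blank k) v) (fun _ _ _ => nofun)
    fun _ _ _ => nofun

theorem Respects.level_represents (hA : M.Respects A zero) {v : V} (hv : A .blank v ≠ zero)
    {n : ℕ} {level : ℕ → V} (hlevel : IsInputChain M A v n level) {i j : ℕ} (hij : i + j = n) :
    Represents A (level i) (M.inputStacks j) ∧ level i ≠ zero := by
  induction j generalizing i with
  | zero =>
    have hpp := hA.foldr_eq _ _ .pop_push_blank v
    simp only [List.foldr] at hpp
    rw [show i = n from hij, hlevel.last]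
    refine ⟨hA.push_represents (hA.blank_represents v) hpp, fun h => hv ?_⟩
    rw [← hpp, h, hA.map_zero]
  | succ j ih =>
    obtain ⟨hrep, hne⟩ := ih (i := i + 1) (by omega)
    have hpush := hlevel.push_mark i (by omega)
    have hpop := hlevel.pop_mark i (by omega)
    rw [inputStacks_succ, ← hpush]
    refine ⟨hA.push_represents hrep (by rw [hpush, hpop]), fun h => hne ?_⟩
    rw [← hpop, ← hpush, h, hA.map_zero]

theorem Respects.not_rejects (hA : M.Respects A zero)
    (hreject : ∀ q, M.instruction q = .reject → ∀ v, A (.state q) v = zero) {v : V}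
    (hv : A .blank v ≠ zero) {n : ℕ} {level : ℕ → V} (hlevel : IsInputChain M A v n level) :
    ¬ M.Rejects n := by
  rintro ⟨c, hc, hreach⟩
  obtain ⟨hrep, hne⟩ := hA.level_represents hv hlevel (zero_add n)
  obtain ⟨u, -, hstate, hu⟩ := hA.tracks_of_reaches hreach ⟨_, hrep, hlevel.start, hne⟩
  exact hu (hstate ▸ hreject _ hc u)

end StackMachine

/-! ### The partial action on bounded stacks -/

namespace StackMachine

variable {κ Γ Q : Type} {M : StackMachine κ Γ Q} {F : Set (Q × (κ → List Γ))} {L : ℕ}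

/-- The partial action of a letter on stacks, where `F` is the set of configurations that are fixed
by their state and `L` bounds the height of the stacks. It acts from the right, so `push k γ` takes
`γ` off the stack `k` and `pop k γ` puts it there. -/
def letterAct (F : Set (Q × (κ → List Γ))) (L : ℕ) :
    Letter κ Γ Q → (κ → List Γ) → Option (κ → List Γ)
  | .state q, s => if (q, s) ∈ F then some s else none
  | .push k γ, s => if (s k).head? = some γ then some (Function.update s k (s k).tail) else none
  | .pop k γ, s => if (s k).length < L then some (Function.update s k (γ :: s k)) else none
  | .empty k, s => if s k = [] then some s else none
  | .blank, s => if s = fun _ => [] then some s else none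

/-- The partial action of a word, whose first letter acts first. -/
def wordAct (F : Set (Q × (κ → List Γ))) (L : ℕ) (w : List (Letter κ Γ Q)) (s : κ → List Γ) :
    Option (κ → List Γ) :=
  w.foldlM (fun s x => letterAct F L x s) s

theorem wordAct_nil (s : κ → List Γ) : wordAct F L [] s = some s :=
  rfl

theorem wordAct_cons (x : Letter κ Γ Q) (w : List (Letter κ Γ Q)) (s : κ → List Γ) :
    wordAct F L (x :: w) s = (letterAct F L x s).bind (wordAct F L w) :=
  rfl

theorem wordAct_singleton (x : Letter κ Γ Q) (s : κ → List Γ) :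
    wordAct F L [x] s = letterAct F L x s :=
  Option.bind_fun_some _

theorem wordAct_append (u v : List (Letter κ Γ Q)) (s : κ → List Γ) :
    wordAct F L (u ++ v) s = (wordAct F L u s).bind (wordAct F L v) :=
  List.foldlM_append

theorem update_cons_tail_of_head? {s : κ → List Γ} {k : κ} {γ : Γ} (h : (s k).head? = some γ) :
    Function.update s k (γ :: (s k).tail) = s := by
  rw [List.cons_head?_tail h, Function.update_eq_self]

/-- The configurations in `F` have stacks of height less than `L` and form a set that is closed
under computation and avoids rejection. -/
structure IsBoundedInvariant (M : StackMachine κ Γ Q) (F : Set (Q × (κ → List Γ))) (L : ℕ) :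
    Prop where
  length_lt : ∀ c ∈ F, ∀ k, (c.2 k).length < L
  step_mem : ∀ c ∈ F, ∀ c', M.step c = some c' → c' ∈ F
  not_reject : ∀ c ∈ F, M.instruction c.1 ≠ .reject

theorem wordAct_state_cons_append_state {w : List (Letter κ Γ Q)} {q q' : Q} {s : κ → List Γ}
    (h : ∀ s', wordAct F L w s = some s' → (q, s') ∈ F → (q', s) ∈ F) :
    wordAct F L (.state q' :: (w ++ [.state q])) s = wordAct F L (w ++ [.state q]) s := by
  rw [wordAct_cons, letterAct]
  split_ifs with hmem
  · rfl
  · rw [wordAct_append, Option.bind_none, eq_comm, Option.bind_eq_none_iff]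
    intro s' hs'
    rw [wordAct_singleton, letterAct, if_neg fun hs => hmem (h s' hs' hs)]

theorem wordAct_push_push {k k' : κ} (h : k ≠ k') (γ γ' : Γ) (s : κ → List Γ) :
    wordAct F L [.push k γ, .push k' γ'] s = wordAct F L [.push k' γ', .push k γ] s := by
  simp only [wordAct_cons, letterAct]
  by_cases hk : (s k).head? = some γ <;> by_cases hk' : (s k').head? = some γ' <;>
    simp [hk, hk', Function.update_of_ne h, Function.update_of_ne h.symm, Function.update_comm h,
      letterAct, wordAct_cons]

theorem wordAct_push_pop {k k' : κ} (h : k ≠ k') (γ γ' : Γ) (s : κ → List Γ) :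
    wordAct F L [.push k γ, .pop k' γ'] s = wordAct F L [.pop k' γ', .push k γ] s := by
  simp only [wordAct_cons, letterAct]
  by_cases hk : (s k).head? = some γ <;> by_cases hk' : (s k').length < L <;>
    simp [hk, hk', Function.update_of_ne h, Function.update_of_ne h.symm, Function.update_comm h,
      letterAct, wordAct_cons]

theorem wordAct_pop_pop {k k' : κ} (h : k ≠ k') (γ γ' : Γ) (s : κ → List Γ) :
    wordAct F L [.pop k γ, .pop k' γ'] s = wordAct F L [.pop k' γ', .pop k γ] s := by
  simp only [wordAct_cons, letterAct]
  by_cases hk : (s k).length < L <;> by_cases hk' : (s k').length < L <;>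
    simp [hk, hk', Function.update_of_ne h, Function.update_of_ne h.symm, Function.update_comm h,
      letterAct, wordAct_cons]

theorem wordAct_empty_push {k k' : κ} (h : k ≠ k') (γ : Γ) (s : κ → List Γ) :
    wordAct F L [.empty k, .push k' γ] s = wordAct F L [.push k' γ, .empty k] s := by
  simp only [wordAct_cons, letterAct]
  by_cases hk : s k = [] <;> by_cases hk' : (s k').head? = some γ <;>
    simp [hk, hk', Function.update_of_ne h, letterAct, wordAct_cons]

theorem wordAct_push_pop_eq_some {k : κ} {γ : Γ} {s s' : κ → List Γ}
    (h : wordAct F L [.push k γ, .pop k γ] s = some s') : (s k).head? = some γ ∧ s' = s := by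
  simp only [wordAct_cons, wordAct_nil, letterAct, Option.bind_eq_some_iff,
    Option.ite_none_right_eq_some, Option.some.injEq] at h
  obtain ⟨_, ⟨hk, rfl⟩, _, ⟨-, rfl⟩, rfl⟩ := h
  rw [Function.update_self, Function.update_idem, update_cons_tail_of_head? hk]
  exact ⟨hk, rfl⟩

theorem wordAct_pop_cons_push_cons {w : List (Letter κ Γ Q)} {k : κ} {γ : Γ} {s : κ → List Γ}
    (h : wordAct F L w s ≠ none → (s k).length < L) :
    wordAct F L (.pop k γ :: .push k γ :: w) s = wordAct F L w s := by
  by_cases hL : (s k).length < L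
  · simp [wordAct_cons, letterAct, hL]
  · rw [not_not.1 (mt h hL), wordAct_cons, letterAct, if_neg hL, Option.bind_none]

namespace IsBoundedInvariant

theorem wordAct_push (hF : M.IsBoundedInvariant F L) {q q' : Q} {k : κ} {γ : Γ}
    (hq : M.instruction q = .push k γ q') (s : κ → List Γ) :
    wordAct F L [.state q', .push k γ, .state q] s = wordAct F L [.push k γ, .state q] s := by
  refine wordAct_state_cons_append_state (w := [.push k γ]) fun s' hs' hmem => ?_
  simp only [wordAct_singleton, letterAct, Option.ite_none_right_eq_some,
    Option.some.injEq] at hs'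
  obtain ⟨hk, rfl⟩ := hs'
  refine hF.step_mem _ hmem _ ?_
  simp only [step, hq, Function.update_self, Function.update_idem, update_cons_tail_of_head? hk]

theorem wordAct_pop (hF : M.IsBoundedInvariant F L) {q : Q} {k : κ} {f : Option Γ → Q}
    (hq : M.instruction q = .pop k f) (γ : Γ) (s : κ → List Γ) :
    wordAct F L [.state (f (some γ)), .pop k γ, .state q] s =
      wordAct F L [.pop k γ, .state q] s := by
  refine wordAct_state_cons_append_state (w := [.pop k γ]) fun s' hs' hmem => ?_
  simp only [wordAct_singleton, letterAct, Option.ite_none_right_eq_some,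
    Option.some.injEq] at hs'
  obtain ⟨-, rfl⟩ := hs'
  exact hF.step_mem _ hmem _ (by simp [step, hq])

theorem wordAct_peek (hF : M.IsBoundedInvariant F L) {q : Q} {k : κ} {f : Option Γ → Q}
    (hq : M.instruction q = .peek k f) (γ : Γ) (s : κ → List Γ) :
    wordAct F L [.state (f (some γ)), .push k γ, .pop k γ, .state q] s =
      wordAct F L [.push k γ, .pop k γ, .state q] s := by
  refine wordAct_state_cons_append_state (w := [.push k γ, .pop k γ]) fun s' hs' hmem => ?_
  obtain ⟨hk, rfl⟩ := wordAct_push_pop_eq_some hs'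
  exact hF.step_mem _ hmem _ (by simp only [step, hq, hk])

theorem wordAct_empty (hF : M.IsBoundedInvariant F L) {q : Q} {k : κ} {f : Option Γ → Q}
    (hq : M.instruction q = .pop k f ∨ M.instruction q = .peek k f) (s : κ → List Γ) :
    wordAct F L [.state (f none), .empty k, .state q] s =
      wordAct F L [.empty k, .state q] s := by
  refine wordAct_state_cons_append_state (w := [.empty k]) fun s' hs' hmem => ?_
  simp only [wordAct_singleton, letterAct, Option.ite_none_right_eq_some,
    Option.some.injEq] at hs'
  obtain ⟨hk, rfl⟩ := hs'
  have hupdate : Function.update s k [] = s := by rw [← hk, Function.update_eq_self]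
  refine hF.step_mem _ hmem _ ?_
  rcases hq with hq | hq <;> simp [step, hq, hk, hupdate]

theorem wordAct_jump (hF : M.IsBoundedInvariant F L) {q q' : Q}
    (hq : M.instruction q = .jump q') (s : κ → List Γ) :
    wordAct F L [.state q', .state q] s = wordAct F L [.state q] s := by
  refine wordAct_state_cons_append_state (w := []) fun s' hs' hmem => ?_
  cases hs'
  exact hF.step_mem _ hmem _ (by simp only [step, hq])

theorem wordAct_pop_push (hF : M.IsBoundedInvariant F L) (q : Q) (k : κ) (γ : Γ)
    (s : κ → List Γ) :
    wordAct F L [.pop k γ, .push k γ, .state q] s = wordAct F L [.state q] s := by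
  refine wordAct_pop_cons_push_cons fun hs => ?_
  rw [wordAct_singleton, letterAct, ne_eq, ite_eq_right_iff, not_forall] at hs
  exact hF.length_lt _ hs.1 k

end IsBoundedInvariant

theorem wordAct_empty_blank (k : κ) (s : κ → List Γ) :
    wordAct F L [.empty k, .blank] s = wordAct F L [.blank] s := by
  by_cases hs : s = fun _ => []
  · simp [hs, wordAct_cons, letterAct]
  · by_cases hk : s k = [] <;> simp [hs, hk, wordAct_cons, letterAct]

theorem wordAct_pop_push_blank (hL : 0 < L) (k : κ) (γ : Γ) (s : κ → List Γ) :
    wordAct F L [.pop k γ, .push k γ, .blank] s = wordAct F L [.blank] s := by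
  refine wordAct_pop_cons_push_cons fun hs => ?_
  rw [wordAct_singleton, letterAct, ne_eq, ite_eq_right_iff, not_forall] at hs
  rwa [hs.1, List.length_nil]

theorem IsBoundedInvariant.wordAct_rel (hF : M.IsBoundedInvariant F L) (hL : 0 < L)
    {l r : List (Letter κ Γ Q)} (h : M.Rel l r) (s : κ → List Γ) :
    wordAct F L l s = wordAct F L r s := by
  cases h with
  | push_push k k' γ γ' h => exact wordAct_push_push h γ γ' s
  | push_pop k k' γ γ' h => exact wordAct_push_pop h γ γ' s
  | pop_pop k k' γ γ' h => exact wordAct_pop_pop h γ γ' s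
  | empty_push k k' γ' h => exact wordAct_empty_push h γ' s
  | push q k γ q' hq => exact hF.wordAct_push hq s
  | pop_push q k γ q' _ => exact hF.wordAct_pop_push q k γ s
  | pop q k f γ hq => exact hF.wordAct_pop hq γ s
  | pop_empty q k f hq => exact hF.wordAct_empty (.inl hq) s
  | peek q k f γ hq => exact hF.wordAct_peek hq γ s
  | peek_empty q k f hq => exact hF.wordAct_empty (.inr hq) s
  | jump q q' hq => exact hF.wordAct_jump hq s
  | empty_blank k => exact wordAct_empty_blank k s
  | pop_push_blank => exact wordAct_pop_push_blank hL _ _ s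

theorem IsBoundedInvariant.letterAct_reject (hF : M.IsBoundedInvariant F L) {q : Q}
    (hq : M.instruction q = .reject) (s : κ → List Γ) : letterAct F L (.state q) s = none :=
  if_neg fun hs => hF.not_reject _ hs hq

theorem exists_finite_closed_of_reaches_accept {c c' : Q × (κ → List Γ)} (h : M.Reaches c c')
    (hc' : M.instruction c'.1 = .accept) :
    ∃ F : Set (Q × (κ → List Γ)), F.Finite ∧ c ∈ F ∧
      ∀ d ∈ F, M.instruction d.1 ≠ .reject ∧ ∀ d', M.step d = some d' → d' ∈ F := by
  induction h using Relation.ReflTransGen.head_induction_on with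
  | refl =>
    refine ⟨{c'}, Set.finite_singleton _, rfl, ?_⟩
    rintro d rfl
    simp [step, hc']
  | @head d e hstep _ ih =>
    obtain ⟨F, hfin, he, hF⟩ := ih
    refine ⟨insert d F, hfin.insert _, Set.mem_insert _ _, ?_⟩
    rintro d (rfl | hd)
    · refine ⟨fun hreject => by simp [step, hreject] at hstep, fun d' hd' => ?_⟩
      rw [hstep] at hd'
      cases hd'
      exact .inr he
    · exact ⟨(hF d hd).1, fun d' hd' => .inr ((hF d hd).2 d' hd')⟩

theorem exists_isBoundedInvariant_of_accepts [Finite κ] {n : ℕ} (h : M.Accepts n) :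
    ∃ F L, M.IsBoundedInvariant F L ∧ (M.start, M.inputStacks n) ∈ F := by
  obtain ⟨c, hc, hreach⟩ := h
  obtain ⟨F, hfin, hstart, hF⟩ := exists_finite_closed_of_reaches_accept hreach hc
  obtain ⟨B, hB⟩ := (Set.finite_iUnion fun k : κ =>
    hfin.image fun c : Q × (κ → List Γ) => (c.2 k).length).bddAbove
  exact ⟨F, B + 1, ⟨fun d hd k => Nat.lt_succ_of_le (hB (Set.mem_iUnion.2 ⟨k, d, hd, rfl⟩)),
    fun d hd => (hF d hd).2, fun d hd => (hF d hd).1⟩, hstart⟩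

/-! ### The partial action of the inputs -/

/-- The partial map that is defined on the stacks holding the input `j` alone and empties them. -/
def clearInput (M : StackMachine κ Γ Q) (j : ℕ) (s : κ → List Γ) : Option (κ → List Γ) :=
  if s = M.inputStacks j then some fun _ => [] else none

theorem letterAct_start_bind_clearInput {n : ℕ} (h : (M.start, M.inputStacks n) ∈ F)
    (s : κ → List Γ) :
    (letterAct F L (.state M.start) s).bind (M.clearInput n) = M.clearInput n s := by
  rw [letterAct]
  split_ifs with hs
  · rfl
  · rw [Option.bind_none, clearInput, if_neg]
    rintro rfl
    exact hs h

theorem letterAct_push_mark_bind_clearInput (j : ℕ) (s : κ → List Γ) :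
    (letterAct F L (.push M.input M.mark) s).bind (M.clearInput j) = M.clearInput (j + 1) s := by
  rw [letterAct, clearInput, inputStacks_succ]
  split_ifs with hhead hs hs
  · simp [hs, clearInput]
  · refine if_neg fun h => hs ?_
    rw [← h, Function.update_self, Function.update_idem, update_cons_tail_of_head? hhead]
  · simp [hs] at hhead
  · rfl

theorem letterAct_pop_mark_bind_clearInput {j : ℕ} (hj : j + 1 < L) (s : κ → List Γ) :
    (letterAct F L (.pop M.input M.mark) s).bind (M.clearInput (j + 1)) = M.clearInput j s := by
  rw [letterAct, clearInput]
  split_ifs with hlen hs hs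
  · simp [hs, clearInput, inputStacks_succ]
  · refine if_neg fun h => hs ?_
    have htail := congrArg (fun s => Function.update s M.input (s M.input).tail) h
    simpa [inputStacks_succ] using htail
  · simp [hs, inputStacks_input, hj] at hlen
  · rfl

theorem wordAct_push_endMark_blank (s : κ → List Γ) :
    wordAct F L [.push M.input M.endMark, .blank] s = M.clearInput 0 s := by
  rw [wordAct_cons, letterAct, clearInput, inputStacks_zero]
  split_ifs with hhead hs hs
  · simp [hs, wordAct_singleton, letterAct]
  · rw [Option.bind_some, wordAct_singleton, letterAct, if_neg]
    intro h
    have htail := congrFun h M.input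
    rw [Function.update_self] at htail
    rw [← h, Function.update_idem, ← htail, update_cons_tail_of_head? hhead] at hs
    exact hs rfl
  · simp [hs] at hhead
  · rfl

theorem letterAct_blank_nil : letterAct F L .blank (fun _ => []) = some fun _ => [] :=
  if_pos rfl

/-! ### Boundedness of the partial actions -/

theorem length_le_of_letterAct {x : Letter κ Γ Q} {s r : κ → List Γ}
    (h : letterAct F L x s = some r) (hs : ∀ k, (s k).length ≤ L) (k : κ) :
    (r k).length ≤ L := by
  cases x <;> simp only [letterAct, Option.ite_none_right_eq_some, Option.some.injEq] at h <;>
    obtain ⟨hx, rfl⟩ := h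
  case push k' γ =>
    rcases eq_or_ne k k' with rfl | hk
    · rw [Function.update_self, List.length_tail]
      exact (Nat.sub_le ..).trans (hs k)
    · rw [Function.update_of_ne hk]
      exact hs k
  case pop k' γ =>
    rcases eq_or_ne k k' with rfl | hk
    · rwa [Function.update_self]
    · rw [Function.update_of_ne hk]
      exact hs k
  all_goals exact hs k

theorem length_le_of_wordAct {w : List (Letter κ Γ Q)} {s r : κ → List Γ}
    (h : wordAct F L w s = some r) (hs : ∀ k, (s k).length ≤ L) : ∀ k, (r k).length ≤ L := by
  induction w generalizing s with
  | nil => cases h; exact hs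
  | cons x w ih =>
    obtain ⟨t, hx, hw⟩ := Option.bind_eq_some_iff.1 h
    exact ih hw (length_le_of_letterAct hx hs)

theorem length_le_of_clearInput {j : ℕ} {s r : κ → List Γ} (h : M.clearInput j s = some r)
    (k : κ) : (r k).length ≤ L := by
  simp only [clearInput, Option.ite_none_right_eq_some, Option.some.injEq] at h
  simp [← h.2]

theorem finite_length_le [Finite κ] [Finite Γ] (L : ℕ) :
    {s : κ → List Γ | ∀ k, (s k).length ≤ L}.Finite :=
  Set.Finite.pi' fun _ => List.finite_length_le Γ L

end StackMachine

/-! ### The network of a machine -/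

namespace StackMachine

section WordIndex

variable {κ Γ Q : Type}

instance [Finite κ] [Finite Γ] [Finite Q] : Finite (Letter κ Γ Q) := by
  let toSum : Letter κ Γ Q → Q ⊕ (κ × Γ) ⊕ (κ × Γ) ⊕ κ ⊕ Unit
    | .state q => .inl q
    | .push k γ => .inr (.inl (k, γ))
    | .pop k γ => .inr (.inr (.inl (k, γ)))
    | .empty k => .inr (.inr (.inr (.inl k)))
    | .blank => .inr (.inr (.inr (.inr ())))
  refine Finite.of_injective toSum fun x y h => ?_
  cases x <;> cases y <;> simp_all [toSum]

variable (κ Γ Q) in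
/-- A zero element and the words of length at most four, enough to state the defining relations. -/
abbrev WordWithZero : Type := Option {w : List (Letter κ Γ Q) // w.length ≤ 4}

variable [Finite κ] [Finite Γ] [Finite Q]

instance : Finite {w : List (Letter κ Γ Q) // w.length ≤ 4} :=
  (List.finite_length_le (Letter κ Γ Q) 4).to_subtype

variable (κ Γ Q) in
/-- The number of elements of `WordWithZero`, whose indices come before those of the inputs. -/
def wordCount : ℕ := Nat.card (WordWithZero κ Γ Q)

/-- The index of an element of `WordWithZero`. -/
def wordWithZeroIndex (x : WordWithZero κ Γ Q) : ℕ := Finite.equivFin (WordWithZero κ Γ Q) x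

variable (κ Γ Q) in
/-- The index of the zero element. -/
def zeroIndex : ℕ := wordWithZeroIndex (none : WordWithZero κ Γ Q)

/-- The index of a word of length at most four; other words get the index of zero. -/
def wordIndex (w : List (Letter κ Γ Q)) : ℕ :=
  wordWithZeroIndex (if h : w.length ≤ 4 then some ⟨w, h⟩ else none)

theorem wordWithZeroIndex_lt (x : WordWithZero κ Γ Q) : wordWithZeroIndex x < wordCount κ Γ Q :=
  (Finite.equivFin _ x).2

theorem zeroIndex_lt : zeroIndex κ Γ Q < wordCount κ Γ Q :=
  wordWithZeroIndex_lt _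

theorem wordIndex_lt (w : List (Letter κ Γ Q)) : wordIndex w < wordCount κ Γ Q :=
  wordWithZeroIndex_lt _

end WordIndex

section Table

variable {κ Γ Q : Type} [Finite κ] [Finite Γ] [Finite Q] (M : StackMachine κ Γ Q)

/-- The entries of the multiplication table that do not depend on the input: products of words,
the defining relations, and the vanishing of the rejecting states. -/
inductive WordEntry : Triple → Prop
  | append (u v : List (Letter κ Γ Q)) (h : (u ++ v).length ≤ 4) :
      WordEntry (wordIndex u, wordIndex v, wordIndex (u ++ v))
  | rel (l r : List (Letter κ Γ Q)) (h : M.Rel l r) :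
      WordEntry (wordIndex ([] : List (Letter κ Γ Q)), wordIndex l, wordIndex r)
  | reject (q : Q) (h : M.instruction q = .reject) :
      WordEntry (wordIndex ([] : List (Letter κ Γ Q)),
        wordIndex ([.state q] : List (Letter κ Γ Q)), zeroIndex κ Γ Q)

variable {M} in
theorem WordEntry.lt {a b c : ℕ} (h : M.WordEntry (a, b, c)) :
    a < wordCount κ Γ Q ∧ b < wordCount κ Γ Q ∧ c < wordCount κ Γ Q := by
  cases h with
  | append => exact ⟨wordIndex_lt _, wordIndex_lt _, wordIndex_lt _⟩
  | rel => exact ⟨wordIndex_lt _, wordIndex_lt _, wordIndex_lt _⟩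
  | reject => exact ⟨wordIndex_lt _, wordIndex_lt _, zeroIndex_lt⟩

theorem finite_wordEntry : {t | M.WordEntry t}.Finite :=
  ((Set.finite_Iio (wordCount κ Γ Q)).prod ((Set.finite_Iio (wordCount κ Γ Q)).prod
    (Set.finite_Iio (wordCount κ Γ Q)))).subset fun _ => WordEntry.lt

/-- The list of all word entries. -/
def wordTable : List Triple := M.finite_wordEntry.toFinset.toList

/-- The multiplication table of the machine on the input `n`. The index `wordCount + i` stands for
the `i`-th element of an `IsInputChain`. -/
def machineTable (n : ℕ) : List Triple :=
  let k := wordCount κ Γ Q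
  let o := wordIndex ([] : List (Letter κ Γ Q))
  M.wordTable ++
    (List.range (k + n + 1)).map (fun i => (o, i, i)) ++
    (List.range (k + n + 1)).map (fun i => (i, o, i)) ++
    [(wordIndex ([.state M.start] : List (Letter κ Γ Q)), k, k)] ++
    (List.range n).map (fun i =>
      (wordIndex ([.push M.input M.mark] : List (Letter κ Γ Q)), k + (i + 1), k + i)) ++
    (List.range n).map (fun i =>
      (wordIndex ([.pop M.input M.mark] : List (Letter κ Γ Q)), k + i, k + (i + 1))) ++
    [(o, k + n, wordIndex ([.push M.input M.endMark, .blank] : List (Letter κ Γ Q)))]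

/-- The entries of `machineTable`. -/
inductive Entry (n : ℕ) : Triple → Prop
  | word {t : Triple} (h : M.WordEntry t) : Entry n t
  | one_mul (i : ℕ) (h : i < wordCount κ Γ Q + n + 1) :
      Entry n (wordIndex ([] : List (Letter κ Γ Q)), i, i)
  | mul_one (i : ℕ) (h : i < wordCount κ Γ Q + n + 1) :
      Entry n (i, wordIndex ([] : List (Letter κ Γ Q)), i)
  | start : Entry n (wordIndex ([.state M.start] : List (Letter κ Γ Q)), wordCount κ Γ Q,
      wordCount κ Γ Q)
  | push_mark (i : ℕ) (h : i < n) :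
      Entry n (wordIndex ([.push M.input M.mark] : List (Letter κ Γ Q)),
        wordCount κ Γ Q + (i + 1), wordCount κ Γ Q + i)
  | pop_mark (i : ℕ) (h : i < n) :
      Entry n (wordIndex ([.pop M.input M.mark] : List (Letter κ Γ Q)),
        wordCount κ Γ Q + i, wordCount κ Γ Q + (i + 1))
  | last : Entry n (wordIndex ([] : List (Letter κ Γ Q)), wordCount κ Γ Q + n,
      wordIndex ([.push M.input M.endMark, .blank] : List (Letter κ Γ Q)))

theorem mem_machineTable {n : ℕ} {t : Triple} : t ∈ M.machineTable n ↔ M.Entry n t := by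
  simp only [machineTable, wordTable, List.mem_append, Finset.mem_toList, Set.Finite.mem_toFinset,
    Set.mem_ofPred_eq, List.mem_map, List.mem_range, List.mem_singleton]
  constructor
  · rintro ((((((h | ⟨i, hi, rfl⟩) | ⟨i, hi, rfl⟩) | rfl) | ⟨i, hi, rfl⟩) | ⟨i, hi, rfl⟩) | rfl)
    exacts [.word h, .one_mul i hi, .mul_one i hi, .start, .push_mark i hi, .pop_mark i hi, .last]
  · intro h
    cases h <;> grind

theorem isTable_machineTable (n : ℕ) : IsTable (wordCount κ Γ Q + n + 1) (M.machineTable n)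
    (wordIndex ([] : List (Letter κ Γ Q))) where
  one_lt := (wordIndex_lt _).trans (by omega)
  lt a b c h := by
    have hword : ∀ w : List (Letter κ Γ Q), wordIndex w < wordCount κ Γ Q := wordIndex_lt
    cases M.mem_machineTable.1 h with
    | word h =>
      have := h.lt
      omega
    | _ => grind
  one_mul i hi := M.mem_machineTable.2 (.one_mul i hi)
  mul_one i hi := M.mem_machineTable.2 (.mul_one i hi)

/-- The network encoding the run of the machine on the input `n`. -/
def machineNetwork (n : ℕ) : Network :=
  tableNetwork (wordCount κ Γ Q + n + 1) (M.machineTable n) (zeroIndex κ Γ Q)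
    (wordIndex ([.blank] : List (Letter κ Γ Q)))

theorem wordIndex_lt_card (w : List (Letter κ Γ Q)) (n : ℕ) :
    wordIndex w < wordCount κ Γ Q + n + 1 :=
  (wordIndex_lt w).trans (by omega)

theorem zeroIndex_lt_card (n : ℕ) : zeroIndex κ Γ Q < wordCount κ Γ Q + n + 1 :=
  zeroIndex_lt.trans (by omega)

theorem networkValid_machineNetwork (n : ℕ) : NetworkValid (M.machineNetwork n) :=
  networkValid_tableNetwork (M.isTable_machineTable n) (zeroIndex_lt_card n)
    (wordIndex_lt_card _ n)

end Table

end StackMachine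

/-! ### Correctness of the network of a machine -/

namespace StackMachine

section Soundness

variable {κ Γ Q V : Type} [Finite κ] [Finite Γ] [Finite Q] {M : StackMachine κ Γ Q} {n : ℕ}
  (P : PointedAction (wordCount κ Γ Q + n + 1) (M.machineTable n) (zeroIndex κ Γ Q)
    (wordIndex ([] : List (Letter κ Γ Q))) V)

theorem act_act_of_entry {a b c : ℕ} (h : M.Entry n (a, b, c)) (v : V) :
    P.act a (P.act b v) = P.act c v :=
  P.act_act a b c (M.mem_machineTable.2 h) v

theorem act_wordIndex {w : List (Letter κ Γ Q)} (hw : w.length ≤ 4) (v : V) :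
    P.act (wordIndex w) v = w.foldr (fun x => P.act (wordIndex [x])) v := by
  induction w with
  | nil => exact P.one_act v
  | cons x w ih =>
    rw [List.foldr_cons, ← ih (by rw [List.length_cons] at hw; omega)]
    exact (act_act_of_entry P (.word (.append [x] w hw)) v).symm

theorem respects_of_pointedAction : M.Respects (fun x => P.act (wordIndex [x])) P.zero where
  foldr_eq l r h v := by
    have hlr := act_act_of_entry P (.word (.rel l r h)) v
    rwa [P.one_act, act_wordIndex P h.length_le.1, act_wordIndex P h.length_le.2] at hlr
  map_zero _ := P.act_zero _ (wordIndex_lt_card _ n)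

theorem act_reject {q : Q} (hq : M.instruction q = .reject) (v : V) :
    P.act (wordIndex ([.state q] : List (Letter κ Γ Q))) v = P.zero := by
  have hzero := act_act_of_entry P (.word (.reject q hq)) v
  rwa [P.one_act, P.zero_act] at hzero

theorem isInputChain_of_pointedAction (v : V) :
    IsInputChain M (fun x => P.act (wordIndex [x])) v n
      fun i => P.act (wordCount κ Γ Q + i) v where
  start := act_act_of_entry P .start v
  push_mark i hi := act_act_of_entry P (.push_mark i hi) v
  pop_mark i hi := act_act_of_entry P (.pop_mark i hi) v
  last := by
    have hlast := act_act_of_entry P .last v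
    rwa [P.one_act, act_wordIndex P (by simp)] at hlast

theorem not_solvableWith_machineNetwork_of_rejects (h : M.Rejects n) {q : ℕ} (hq : 2 ≤ q) :
    ¬ SolvableWith (M.machineNetwork n) q := by
  intro hsol
  obtain ⟨V, P, v, hv⟩ := exists_pointedAction_of_solvableWith_tableNetwork
    (M.isTable_machineTable n) (zeroIndex_lt_card n) (wordIndex_lt_card _ n) hq hsol
  exact (respects_of_pointedAction P).not_rejects (fun _ => act_reject P) hv
    (isInputChain_of_pointedAction P v) h

end Soundness

section Completeness

variable {κ Γ Q : Type} [Finite κ] [Finite Γ] [Finite Q] (M : StackMachine κ Γ Q)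
  (F : Set (Q × (κ → List Γ))) (L n : ℕ)

/-- The partial action of the element with index `i` of the table of the machine. -/
def indexAct (i : ℕ) (s : κ → List Γ) : Option (κ → List Γ) :=
  if h : i < wordCount κ Γ Q then
    ((Finite.equivFin (WordWithZero κ Γ Q)).symm ⟨i, h⟩).bind fun w => wordAct F L w.1 s
  else M.clearInput (n - (i - wordCount κ Γ Q)) s

theorem indexAct_wordWithZeroIndex (x : WordWithZero κ Γ Q) (s : κ → List Γ) :
    M.indexAct F L n (wordWithZeroIndex x) s = x.bind fun w => wordAct F L w.1 s := by
  rw [indexAct, dif_pos (wordWithZeroIndex_lt x)]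
  exact congrArg (Option.bind · _) ((Finite.equivFin _).symm_apply_apply x)

theorem indexAct_zeroIndex (s : κ → List Γ) : M.indexAct F L n (zeroIndex κ Γ Q) s = none :=
  M.indexAct_wordWithZeroIndex F L n none s

theorem indexAct_wordIndex {w : List (Letter κ Γ Q)} (hw : w.length ≤ 4) :
    M.indexAct F L n (wordIndex w) = wordAct F L w := by
  funext s
  rw [wordIndex, indexAct_wordWithZeroIndex, dif_pos hw, Option.bind_some]

theorem indexAct_wordIndex_nil :
    M.indexAct F L n (wordIndex ([] : List (Letter κ Γ Q))) = some :=
  M.indexAct_wordIndex F L n (Nat.zero_le _)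

theorem indexAct_wordIndex_singleton (x : Letter κ Γ Q) :
    M.indexAct F L n (wordIndex [x]) = letterAct F L x := by
  rw [indexAct_wordIndex _ _ _ _ (by simp)]
  exact funext (wordAct_singleton x)

theorem indexAct_wordCount_add (i : ℕ) :
    M.indexAct F L n (wordCount κ Γ Q + i) = M.clearInput (n - i) := by
  funext s
  rw [indexAct, dif_neg (by omega), Nat.add_sub_cancel_left]

variable {M F L n}

theorem length_le_of_indexAct {i : ℕ} {s r : κ → List Γ} (h : M.indexAct F L n i s = some r)
    (hs : ∀ k, (s k).length ≤ L) : ∀ k, (r k).length ≤ L := by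
  rw [indexAct] at h
  split_ifs at h
  · obtain ⟨w, -, hw⟩ := Option.bind_eq_some_iff.1 h
    exact length_le_of_wordAct hw hs
  · exact length_le_of_clearInput h

theorem IsBoundedInvariant.indexAct_bind_of_wordEntry (hF : M.IsBoundedInvariant F L)
    (hL : 0 < L) {a b c : ℕ} (h : M.WordEntry (a, b, c)) (s : κ → List Γ) :
    (M.indexAct F L n a s).bind (M.indexAct F L n b) = M.indexAct F L n c s := by
  cases h with
  | append u v h =>
    have hlen := List.length_append (as := u) (bs := v)
    rw [indexAct_wordIndex _ _ _ _ h, indexAct_wordIndex (w := u) _ _ _ _ (by omega),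
      indexAct_wordIndex (w := v) _ _ _ _ (by omega), wordAct_append]
  | rel l r h =>
    rw [indexAct_wordIndex_nil, Option.bind_some, indexAct_wordIndex _ _ _ _ h.length_le.1,
      indexAct_wordIndex _ _ _ _ h.length_le.2, hF.wordAct_rel hL h]
  | reject q hq =>
    rw [indexAct_wordIndex_nil, Option.bind_some, indexAct_wordIndex_singleton,
      indexAct_zeroIndex, hF.letterAct_reject hq]

theorem IsBoundedInvariant.isPartialAction_indexAct (hF : M.IsBoundedInvariant F L)
    (hstart : (M.start, M.inputStacks n) ∈ F) :
    IsPartialAction (M.machineTable n) (zeroIndex κ Γ Q) (M.indexAct F L n) where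
  bind a b c h s := by
    have hL : n + 1 < L := by
      simpa [inputStacks_input] using hF.length_lt _ hstart M.input
    cases M.mem_machineTable.1 h with
    | word h => exact hF.indexAct_bind_of_wordEntry (by omega) h s
    | one_mul i _ => rw [indexAct_wordIndex_nil, Option.bind_some]
    | mul_one i _ => rw [indexAct_wordIndex_nil, Option.bind_fun_some]
    | start =>
      have hclear := M.indexAct_wordCount_add F L n 0
      rw [Nat.add_zero, Nat.sub_zero] at hclear
      rw [hclear, indexAct_wordIndex_singleton, letterAct_start_bind_clearInput hstart]
    | push_mark i hi =>
      rw [indexAct_wordIndex_singleton, indexAct_wordCount_add, indexAct_wordCount_add,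
        letterAct_push_mark_bind_clearInput, show n - (i + 1) + 1 = n - i by omega]
    | pop_mark i hi =>
      rw [indexAct_wordIndex_singleton, indexAct_wordCount_add, indexAct_wordCount_add,
        show n - i = n - (i + 1) + 1 by omega, letterAct_pop_mark_bind_clearInput (by omega)]
    | last =>
      rw [indexAct_wordIndex_nil, Option.bind_some, indexAct_wordCount_add, Nat.sub_self,
        indexAct_wordIndex _ _ _ _ (by simp), wordAct_push_endMark_blank]
  zero := M.indexAct_zeroIndex F L n

theorem exists_pow_solvableWith_machineNetwork_of_accepts (h : M.Accepts n) {c : ℕ} (hc : 0 < c) :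
    ∃ m, 1 ≤ m ∧ SolvableWith (M.machineNetwork n) (c ^ m) := by
  obtain ⟨F, L, hF, hstart⟩ := exists_isBoundedInvariant_of_accepts h
  have : Finite {s : κ → List Γ // ∀ k, (s k).length ≤ L} := (finite_length_le L).to_subtype
  refine exists_pow_solvableWith_tableNetwork (M.isTable_machineTable n) (zeroIndex_lt_card n)
    (wordIndex_lt_card _ n) hc ((hF.isPartialAction_indexAct hstart).restrict
      fun _ _ _ => length_le_of_indexAct) ⟨⟨fun _ => [], by simp⟩, ?_⟩
  rw [ne_eq, restrictPartial_eq_none_iff, indexAct_wordIndex_singleton, letterAct_blank_nil]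
  exact Option.some_ne_none _

end Completeness

end StackMachine

/-! ### Simulation of partial recursive functions -/

namespace StackMachine

section TM2

open Turing TM2

variable {κ Γ Λ σ : Type} (N : Λ → Stmt (fun _ : κ => Γ) Λ σ) (S : Finset Λ) (k₀ : κ) (γ₀ : Γ)

/-- The states of the simulation of a `TM2` machine: the statements under execution together with
the internal state, and a verdict. -/
abbrev SimState : Type := ({t : Stmt (fun _ : κ => Γ) Λ σ // some t ∈ stmts N S} × σ) ⊕ Bool

theorem finite_simState [Finite σ] : Finite (SimState N S) := by
  have hfin : {t : Stmt (fun _ : κ => Γ) Λ σ | some t ∈ stmts N S}.Finite :=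
    (stmts N S).finite_toSet.preimage (Option.some_injective _).injOn
  have : Finite {t : Stmt (fun _ : κ => Γ) Λ σ // some t ∈ stmts N S} := hfin.to_subtype
  infer_instance

/-- The state executing the statement `t`, with a junk value for statements outside the support. -/
def simState (t : Stmt (fun _ : κ => Γ) Λ σ) (v : σ) : SimState N S :=
  if h : some t ∈ stmts N S then .inl (⟨t, h⟩, v) else .inr false

/-- The instruction simulating a statement. A halting machine gives its verdict by popping the
stack `k₀`: it rejects if it finds the symbol `γ₀`. -/
def stmtInstruction (t : Stmt (fun _ : κ => Γ) Λ σ) (v : σ) : Instruction κ Γ (SimState N S) :=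
  match t with
  | .push k f t => .push k (f v) (simState N S t v)
  | .peek k f t => .peek k fun o => simState N S t (f v o)
  | .pop k f t => .pop k fun o => simState N S t (f v o)
  | .load f t => .jump (simState N S t (f v))
  | .branch p t₁ t₂ => .jump (simState N S (cond (p v) t₁ t₂) v)
  | .goto l => .jump (simState N S (N (l v)) v)
  | .halt => .pop k₀ fun o => .inr (decide (o ≠ some γ₀))

/-- The instructions of the simulation. -/
def simInstruction : SimState N S → Instruction κ Γ (SimState N S)
  | .inl (t, v) => stmtInstruction N S k₀ γ₀ t v
  | .inr true => .accept
  | .inr false => .reject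

theorem simInstruction_simState {t : Stmt (fun _ : κ => Γ) Λ σ} (h : some t ∈ stmts N S) (v : σ) :
    simInstruction N S k₀ γ₀ (simState N S t v) = stmtInstruction N S k₀ γ₀ t v := by
  rw [simState, dif_pos h]
  rfl

/-- The configuration simulating `c`. -/
def simConfig (c : Cfg (fun _ : κ => Γ) Λ σ) : SimState N S × (κ → List Γ) :=
  match c.l with
  | some l => (simState N S (N l) c.var, c.stk)
  | none => (.inr (decide ((c.stk k₀).head? ≠ some γ₀)), Function.update c.stk k₀ (c.stk k₀).tail)

variable {N S k₀ γ₀} {M : StackMachine κ Γ (SimState N S)}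

theorem reaches_simConfig_stepAux [inst : DecidableEq κ]
    (hM : M.instruction = simInstruction N S k₀ γ₀) {t : Stmt (fun _ : κ => Γ) Λ σ}
    (ht : some t ∈ stmts N S) (v : σ) (s : κ → List Γ) :
    M.Reaches (simState N S t v, s) (simConfig N S k₀ γ₀ (stepAux t v s)) := by
  obtain rfl : inst = fun x y => Classical.propDecidable (x = y) := Subsingleton.elim _ _
  induction t generalizing v s with
  | push k f t ih =>
    refine .head ?_ (ih (stmts_trans (by simp [stmts₁, stmts₁_self]) ht) _ _)
    simp only [step, hM, simInstruction_simState N S k₀ γ₀ ht, stmtInstruction]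
  | peek k f t ih =>
    refine .head ?_ (ih (stmts_trans (by simp [stmts₁, stmts₁_self]) ht) _ _)
    simp only [step, hM, simInstruction_simState N S k₀ γ₀ ht, stmtInstruction]
  | pop k f t ih =>
    refine .head ?_ (ih (stmts_trans (by simp [stmts₁, stmts₁_self]) ht) _ _)
    simp only [step, hM, simInstruction_simState N S k₀ γ₀ ht, stmtInstruction]
  | load f t ih =>
    refine .head ?_ (ih (stmts_trans (by simp [stmts₁, stmts₁_self]) ht) _ _)
    simp only [step, hM, simInstruction_simState N S k₀ γ₀ ht, stmtInstruction]
  | branch p t₁ t₂ ih₁ ih₂ =>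
    refine .head (b := (simState N S (cond (p v) t₁ t₂) v, s)) ?_ ?_
    · simp only [step, hM, simInstruction_simState N S k₀ γ₀ ht, stmtInstruction]
    cases hp : p v <;> simp only [stepAux, hp, cond_true, cond_false]
    · exact ih₂ (stmts_trans (by simp [stmts₁, stmts₁_self]) ht) _ _
    · exact ih₁ (stmts_trans (by simp [stmts₁, stmts₁_self]) ht) _ _
  | goto l =>
    refine .single ?_
    simp only [step, hM, simInstruction_simState N S k₀ γ₀ ht, stmtInstruction, stepAux, simConfig]
  | halt =>
    refine .single ?_
    simp only [step, hM, simInstruction_simState N S k₀ γ₀ ht, stmtInstruction, stepAux, simConfig]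
    congr

theorem reaches_simConfig_of_step [DecidableEq κ] (hM : M.instruction = simInstruction N S k₀ γ₀)
    {c c' : Cfg (fun _ : κ => Γ) Λ σ} (hc : c.l ∈ Finset.insertNone S)
    (h : c' ∈ TM2.step N c) :
    M.Reaches (simConfig N S k₀ γ₀ c) (simConfig N S k₀ γ₀ c') := by
  obtain ⟨l | l, v, s⟩ := c
  · cases h
  · obtain rfl : stepAux (N l) v s = c' := Option.some.inj h
    refine reaches_simConfig_stepAux hM ?_ v s
    rw [stmts, Finset.some_mem_insertNone, Finset.mem_biUnion]
    exact ⟨l, Finset.some_mem_insertNone.1 hc, stmts₁_self⟩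

theorem reaches_simConfig_of_reaches [DecidableEq κ] [Inhabited Λ] (hS : Supports N S)
    (hM : M.instruction = simInstruction N S k₀ γ₀)
    {c c' : Cfg (fun _ : κ => Γ) Λ σ} (hc : c.l ∈ Finset.insertNone S)
    (h : StateTransition.Reaches (TM2.step N) c c') :
    M.Reaches (simConfig N S k₀ γ₀ c) (simConfig N S k₀ γ₀ c') := by
  induction h using Relation.ReflTransGen.head_induction_on with
  | refl => exact .refl
  | head hstep _ ih =>
    exact (reaches_simConfig_of_step hM hc hstep).trans (ih (step_supports N hS hstep hc))

end TM2

end StackMachine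

section PartrecToTM2

open Turing.PartrecToTM2

theorem trNat_two_mul_add_one (m : ℕ) : trNat (2 * m + 1) = Γ'.bit1 :: trNat m := by
  have hcast : ((2 * m + 1 : ℕ) : Num) = Num.bit1 (m : Num) := by
    rw [← Num.of_to_nat (Num.bit1 (m : Num)), Num.cast_bit1, Num.to_of_nat, two_mul]
  rw [trNat, trNat, hcast]
  cases (m : Num) <;> rfl

theorem trNat_two_pow_sub_one (n : ℕ) : trNat (2 ^ n - 1) = List.replicate n Γ'.bit1 := by
  induction n with
  | zero => simp
  | succ n ih =>
    have hpow : 2 ^ (n + 1) - 1 = 2 * (2 ^ n - 1) + 1 := by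
      have := Nat.one_le_two_pow (n := n)
      omega
    rw [hpow, trNat_two_mul_add_one, ih, List.replicate_succ]

theorem primrec_log_two : Primrec (Nat.log 2) := by
  have hpow : Primrec₂ fun x y : ℕ => x ^ y := Primrec₂.unpaired'.1 Nat.Primrec.pow
  have hgreatest : Primrec fun m : ℕ => Nat.findGreatest (fun i => 2 ^ i ≤ m) m :=
    Primrec.nat_findGreatest Primrec.id
      (Primrec.nat_le.comp₂ (hpow.comp₂ (Primrec₂.const 2) Primrec₂.right) Primrec₂.left)
  refine hgreatest.of_eq fun m => Nat.findGreatest_eq_iff.2 ⟨Nat.log_le_self 2 m, fun h => ?_, ?_⟩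
  · exact Nat.pow_log_le_self 2 (by rintro rfl; simp at h)
  · exact fun i hi _ => (Nat.lt_pow_of_log_lt one_lt_two hi).not_ge

theorem finite_K' : Finite K' :=
  Finite.of_surjective ![K'.main, .rev, .aux, .stack] fun k => by
    cases k
    exacts [⟨0, rfl⟩, ⟨1, rfl⟩, ⟨2, rfl⟩, ⟨3, rfl⟩]

namespace StackMachine

/-- The stack machine running the code `c`, which rejects if the number it computes is odd. Its
input in unary represents `2 ^ n - 1` in binary. -/
def ofCode (c : Turing.ToPartrec.Code) :
    StackMachine K' Γ' (SimState tr (codeSupp c Cont'.halt)) where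
  instruction := simInstruction tr (codeSupp c Cont'.halt) .main .bit1
  start := simState tr (codeSupp c Cont'.halt) (tr (trNormal c Cont'.halt)) none
  input := .main
  mark := .bit1
  endMark := .cons

variable {c : Turing.ToPartrec.Code} {n y : ℕ}

theorem simConfig_init : simConfig tr (codeSupp c Cont'.halt) .main .bit1 (init c [2 ^ n - 1]) =
    ((ofCode c).start, (ofCode c).inputStacks n) := by
  refine Prod.ext rfl (funext fun k => ?_)
  cases k <;> simp [simConfig, init, inputStacks, ofCode, trNat_two_pow_sub_one]

theorem ofCode_reaches (h : [y] ∈ c.eval [2 ^ n - 1]) :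
    (ofCode c).Reaches ((ofCode c).start, (ofCode c).inputStacks n)
      (simConfig tr (codeSupp c Cont'.halt) .main .bit1 (halt [y])) := by
  let _ : Inhabited Λ' := ⟨trNormal c Cont'.halt⟩
  have hS : Turing.TM2.Supports tr (codeSupp c Cont'.halt) := tr_supports c Cont'.halt
  have heval : halt [y] ∈ StateTransition.eval (Turing.TM2.step tr) (init c [2 ^ n - 1]) := by
    rw [tr_eval]
    exact Part.mem_map _ h
  rw [← simConfig_init]
  exact reaches_simConfig_of_reaches hS rfl (Finset.some_mem_insertNone.2 hS.1)
    (StateTransition.mem_eval.1 heval).1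

theorem ofCode_accepts (h : [0] ∈ c.eval [2 ^ n - 1]) : (ofCode c).Accepts n :=
  ⟨_, by simp [ofCode, simConfig, halt, simInstruction], ofCode_reaches h⟩

theorem ofCode_rejects (h : [1] ∈ c.eval [2 ^ n - 1]) : (ofCode c).Rejects n := by
  have htr : trNat 1 = [Γ'.bit1] := trNat_two_pow_sub_one 1
  exact ⟨_, by simp [ofCode, simConfig, halt, simInstruction, htr], ofCode_reaches h⟩

theorem exists_stackMachine_of_partrec {f : ℕ →. ℕ} (hf : Partrec f) :
    ∃ (κ Γ Q : Type) (_ : Finite κ) (_ : Finite Γ) (_ : Finite Q) (M : StackMachine κ Γ Q),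
      ∀ n, (0 ∈ f n → M.Accepts n) ∧ (1 ∈ f n → M.Rejects n) := by
  have hlog : Partrec fun m => f (Nat.log 2 (m + 1)) :=
    hf.comp (primrec_log_two.comp Primrec.succ).to_comp
  obtain ⟨c, hc⟩ := Turing.ToPartrec.Code.exists_code (Nat.Partrec'.part_iff₁.2 hlog)
  have heval (n y : ℕ) (hy : y ∈ f n) : [y] ∈ c.eval [2 ^ n - 1] := by
    have hlog_pow : Nat.log 2 (2 ^ n - 1 + 1) = n := by
      rw [Nat.sub_add_cancel Nat.one_le_two_pow, Nat.log_pow one_lt_two]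
    have hc' := hc ⟨[2 ^ n - 1], rfl⟩
    change c.eval [2 ^ n - 1] = (f (Nat.log 2 (2 ^ n - 1 + 1))).map _ at hc'
    rw [hc', hlog_pow]
    exact Part.mem_map _ hy
  exact ⟨K', Γ', _, finite_K', inferInstance, finite_simState _ _, ofCode c,
    fun n => ⟨fun h => ofCode_accepts (heval n 0 h), fun h => ofCode_rejects (heval n 1 h)⟩⟩

end StackMachine

end PartrecToTM2

/-! ### Primitive recursiveness of the construction -/

section Primrec

attribute [local fun_prop] Primrec Primrec.id Primrec.const Primrec.comp Primrec.pair Primrec.fst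
  Primrec.snd Primrec.fin_val Primrec.list_length Primrec.list_range

variable {α β γ : Type} [Primcodable α] [Primcodable β] [Primcodable γ]

@[local fun_prop]
theorem primrec_add {f g : α → ℕ} (hf : Primrec f) (hg : Primrec g) :
    Primrec fun a => f a + g a :=
  Primrec.nat_add.comp hf hg

@[local fun_prop]
theorem primrec_mul {f g : α → ℕ} (hf : Primrec f) (hg : Primrec g) :
    Primrec fun a => f a * g a :=
  Primrec.nat_mul.comp hf hg

@[local fun_prop]
theorem primrec_cons {f : α → β} {g : α → List β} (hf : Primrec f) (hg : Primrec g) :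
    Primrec fun a => f a :: g a :=
  Primrec.list_cons.comp hf hg

@[local fun_prop]
theorem primrec_append {f g : α → List β} (hf : Primrec f) (hg : Primrec g) :
    Primrec fun a => f a ++ g a :=
  Primrec.list_append.comp hf hg

@[local fun_prop]
theorem primrec_map {f : α → List β} {g : α → β → γ} (hf : Primrec f)
    (hg : Primrec fun p : α × β => g p.1 p.2) : Primrec fun a => (f a).map (g a) :=
  Primrec.list_map hf hg

@[local fun_prop]
theorem primrec_flatMap {f : α → List β} {g : α → β → List γ} (hf : Primrec f)
    (hg : Primrec fun p : α × β => g p.1 p.2) : Primrec fun a => (f a).flatMap (g a) :=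
  Primrec.list_flatMap hf hg

@[local fun_prop]
theorem primrec_replicate {f : α → ℕ} {g : α → β} (hf : Primrec f) (hg : Primrec g) :
    Primrec fun a => List.replicate (f a) (g a) := by
  have hmap : Primrec fun a => (List.range (f a)).map fun _ => g a := by fun_prop
  exact hmap.of_eq fun a => by simp

@[local fun_prop]
theorem primrec_zipIdx {f : α → List β} (hf : Primrec f) : Primrec fun a => (f a).zipIdx := by
  have hfoldl : Primrec fun l : List β =>
      l.foldl (fun (acc : List (β × ℕ)) b => acc ++ [(b, acc.length)]) [] :=
    Primrec.list_foldl .id (.const []) <| Primrec.to₂ <|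
      show Primrec fun p : List β × List (β × ℕ) × β => p.2.1 ++ [(p.2.2, p.2.1.length)] by fun_prop
  refine (hfoldl.comp hf).of_eq fun a => ?_
  induction f a using List.reverseRecOn with
  | nil => rfl
  | append_singleton l b ih => simp [List.foldl_append, ih, List.zipIdx_append]

variable {K w : α → ℕ}

@[local fun_prop]
theorem primrec_depthTwoNetwork (s : ℕ) {encs : α → List (List ℕ)} {decs : α → List Decoder}
    (hencs : Primrec encs) (hdecs : Primrec decs) :
    Primrec fun a => depthTwoNetwork s (encs a) (decs a) := by
  unfold depthTwoNetwork depthTwoEdges Decoder.inputs Decoder.access Decoder.demands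
  fun_prop

@[local fun_prop]
theorem primrec_quadEncoders {qs : α → List Quad} (hK : Primrec K) (hqs : Primrec qs) :
    Primrec fun a => quadEncoders (K a) (qs a) := by
  unfold quadEncoders
  fun_prop

@[local fun_prop]
theorem primrec_quadDecoders {qs : α → List Quad} (hK : Primrec K) (hqs : Primrec qs)
    (hw : Primrec w) : Primrec fun a => quadDecoders (K a) (qs a) (w a) := by
  unfold quadDecoders squareDecoders equationDecoders mixDecoders
  fun_prop

@[local fun_prop]
theorem primrec_quintQuads {fs : α → List Quint} (hK : Primrec K) (hfs : Primrec fs) :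
    Primrec fun a => quintQuads (K a) (fs a) := by
  unfold quintQuads splitQuint
  fun_prop

@[local fun_prop]
theorem primrec_quintNetwork {fs : α → List Quint} (hK : Primrec K) (hfs : Primrec fs)
    (hw : Primrec w) : Primrec fun a => quintNetwork (K a) (fs a) (w a) := by
  unfold quintNetwork quadNetwork
  fun_prop

@[local fun_prop]
theorem primrec_steinbergQuints {T : α → List Triple} (z : ℕ) (hK : Primrec K) (hT : Primrec T) :
    Primrec fun a => steinbergQuints (K a) (T a) z := by
  unfold steinbergQuints productQuint commutationQuint steinbergIndex
  fun_prop

@[local fun_prop]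
theorem primrec_tableNetwork {T : α → List Triple} (z p : ℕ) (hK : Primrec K) (hT : Primrec T) :
    Primrec fun a => tableNetwork (K a) (T a) z p := by
  unfold tableNetwork
  fun_prop

variable {κ Γ Q : Type} [Finite κ] [Finite Γ] [Finite Q] (M : StackMachine κ Γ Q)

@[local fun_prop]
theorem StackMachine.primrec_machineTable : Primrec M.machineTable := by
  unfold machineTable
  fun_prop

theorem StackMachine.primrec_machineNetwork : Primrec M.machineNetwork := by
  unfold machineNetwork
  fun_prop

end Primrec

/-! ### Undecidability -/

theorem exists_primrec_network_of_partrec {f : ℕ →. ℕ} (hf : Partrec f) :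
    ∃ net : ℕ → Network, Primrec net ∧ ∀ n, NetworkValid (net n) ∧
      (0 ∈ f n → ∀ c, 0 < c → ∃ m, 1 ≤ m ∧ SolvableWith (net n) (c ^ m)) ∧
      (1 ∈ f n → ∀ q, 2 ≤ q → ¬ SolvableWith (net n) q) := by
  obtain ⟨κ, Γ, Q, _, _, _, M, hM⟩ := StackMachine.exists_stackMachine_of_partrec hf
  refine ⟨M.machineNetwork, M.primrec_machineNetwork, fun n =>
    ⟨M.networkValid_machineNetwork n, fun h c hc => ?_, fun h q hq => ?_⟩⟩
  · exact M.exists_pow_solvableWith_machineNetwork_of_accepts ((hM n).1 h) hc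
  · exact M.not_solvableWith_machineNetwork_of_rejects ((hM n).2 h) hq

theorem undecidable_network_coding_power_general :
    ¬ ∃ f : Network → Bool, Computable f ∧
      ∀ net : Network, NetworkValid net →
        ((∀ c, 2 ≤ c → ∃ m : ℕ, 1 ≤ m ∧ SolvableWith net (c ^ m)) → f net = true) ∧
        ((∀ q, 2 ≤ q → ¬ SolvableWith net q) → f net = false) := by
  rintro ⟨f, hf, hsep⟩
  have hself : Partrec fun x : ℕ => (Denumerable.ofNat Nat.Partrec.Code x).eval x :=
    Nat.Partrec.Code.eval_part.comp (Computable.ofNat _) Computable.id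
  obtain ⟨net, hnet, hred⟩ := exists_primrec_network_of_partrec hself
  have hdiag : Computable fun x => cond (f (net x)) 1 0 :=
    Computable.cond (hf.comp hnet.to_comp) (Computable.const 1) (Computable.const 0)
  obtain ⟨e, he⟩ := Nat.Partrec.Code.exists_code.1 (Partrec.nat_iff.1 hdiag.partrec)
  obtain ⟨hvalid, hsolvable, hunsolvable⟩ := hred (Encodable.encode e)
  simp only [Denumerable.ofNat_encode, he] at hsolvable hunsolvable
  obtain ⟨htrue, hfalse⟩ := hsep _ hvalid
  cases hb : f (net (Encodable.encode e)) with
  | true => simp [hfalse (hunsolvable (by simp [hb]))] at hb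
  | false => simp [htrue fun c hc => hsolvable (by simp [hb]) c (by omega)] at hb

/-- Theorem `netcode_vec`: for any fixed `c ≥ 2`, it is undecidable
whether, given a (valid) network, there exists `m ≥ 1` such that the network is solvable
with alphabet size `q = c^m`. -/
theorem undecidable_network_coding_power (c : ℕ) (hc : 2 ≤ c) :
    ¬ ∃ f : Network → Bool, Computable f ∧
      ∀ net : Network, NetworkValid net →
        (f net = true ↔ ∃ m : ℕ, 1 ≤ m ∧ SolvableWith net (c ^ m)) := by
  rintro ⟨f, hf, hdec⟩
  refine undecidable_network_coding_power_general ⟨f, hf, fun net hvalid =>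
    ⟨fun h => (hdec net hvalid).2 (h c hc), fun h => Bool.eq_false_iff.2 fun htrue => ?_⟩⟩
  obtain ⟨m, hm, hsolv⟩ := (hdec net hvalid).1 htrue
  exact h _ (hc.trans (Nat.le_self_pow (by omega) c)) hsolv

end
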